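/- arXiv:2011.00932 — 7 statements merged into one kernel-verified Lean document; each statement's English description precedes it below -/
import Mathlib

section
/- Let F be a field, τ : F → F a ring homomorphism, k := F^τ = {a ∈ F : τ(a) = a} its fixed field, and K a subfield of F with τ(K) ⊆ K and k ⊆ K. Let R ⊆ F be a K-subalgebra with τ(R) ⊆ R, and let B be a commutative k-algebra; endow R ⊗_k B with the ring endomorphism determined by τ(r ⊗ b) = τ(r) ⊗ b. Then: (i) the natural map R ⊗_k B → F ⊗_k B is injective; and (ii) the subring of τ-fixed elements of R ⊗_k B is exactly the image of k ⊗_k B, i.e. (R ⊗_k B)^τ = 1 ⊗ B. -/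
open scoped TensorProduct

set_option synthInstance.maxHeartbeats 400000
set_option maxHeartbeats 1000000

/-!
The elements of `R` fixed by `τ` are `k · 1`, i.e. `k → R → R` is exact, where the first map is
`c ↦ c • 1` and the second is `τ - id`. Since `B` is flat over the field `k`, this sequence stays
exact after applying `_ ⊗[k] B`, and the image of `k ⊗[k] B` in `R ⊗[k] B` is `1 ⊗ B`. Flatness also
keeps the inclusion `R ⊆ F` injective.
-/

theorem mem_range_rTensor_toSpanSingleton {k M N : Type*} [CommSemiring k]
    [AddCommMonoid M] [Module k M] [AddCommMonoid N] [Module k N] (m : M) (x : M ⊗[k] N) :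
    x ∈ LinearMap.range ((LinearMap.toSpanSingleton k M m).rTensor N) ↔
      ∃ n : N, x = m ⊗ₜ[k] n := by
  have rTensor_lid_symm (n : N) :
      (LinearMap.toSpanSingleton k M m).rTensor N ((TensorProduct.lid k N).symm n) =
        m ⊗ₜ[k] n := by
    simp
  rw [LinearMap.mem_range, (TensorProduct.lid k N).symm.surjective.exists]
  simp only [rTensor_lid_symm, eq_comm]

section FixedPoints

variable {k M : Type*} [CommRing k] [AddCommGroup M] [Module k M]

theorem exact_toSpanSingleton_sub_id {φ : M →ₗ[k] M} {m : M}
    (hφ : ∀ y, φ y = y ↔ y ∈ Submodule.span k {m}) :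
    Function.Exact (LinearMap.toSpanSingleton k M m) (φ - LinearMap.id : M →ₗ[k] M) := fun y ↦ by
  rw [LinearMap.sub_apply, LinearMap.id_apply, sub_eq_zero, hφ, Submodule.mem_span_singleton]
  rfl

theorem rTensor_apply_eq_self_iff_exists_tmul {N : Type*} [AddCommGroup N] [Module k N]
    [Module.Flat k N] {φ : M →ₗ[k] M} {m : M} (hφ : ∀ y, φ y = y ↔ y ∈ Submodule.span k {m})
    (x : M ⊗[k] N) :
    φ.rTensor N x = x ↔ ∃ n : N, x = m ⊗ₜ[k] n := by
  have exact_rTensor := Module.Flat.rTensor_exact N (exact_toSpanSingleton_sub_id hφ)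
  rw [← mem_range_rTensor_toSpanSingleton, LinearMap.mem_range, ← Set.mem_range,
    ← exact_rTensor x, LinearMap.rTensor_sub, LinearMap.rTensor_id, LinearMap.sub_apply,
    LinearMap.id_apply, sub_eq_zero]

end FixedPoints

section Bot

variable {k A : Type*} [CommSemiring k] [Semiring A] [Algebra k A]

theorem apply_eq_self_iff_mem_span_one {σ : A →ₐ[k] A}
    (hσ : ∀ a, σ a = a → a ∈ (⊥ : Subalgebra k A)) (a : A) :
    σ a = a ↔ a ∈ Submodule.span k {(1 : A)} := by
  rw [← Submodule.one_eq_span, ← Algebra.toSubmodule_bot, Subalgebra.mem_toSubmodule]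
  refine ⟨hσ a, fun ha ↦ ?_⟩
  obtain ⟨c, rfl⟩ := Algebra.mem_bot.1 ha
  exact σ.commutes c

theorem mem_bot_of_coe_mem_bot {R : Subalgebra k A} {r : R}
    (hr : (r : A) ∈ (⊥ : Subalgebra k A)) : r ∈ (⊥ : Subalgebra k R) := by
  obtain ⟨c, hc⟩ := Algebra.mem_bot.1 hr
  exact Algebra.mem_bot.2 ⟨c, Subtype.ext hc⟩

end Bot

theorem linear_disjointness_tensor_general {k A B : Type*} [CommRing k] [Ring A] [Algebra k A]
    [AddCommGroup B] [Module k B] [Module.Flat k B]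
    (τ : A →ₐ[k] A) (hτ : ∀ a, τ a = a → a ∈ (⊥ : Subalgebra k A))
    (R : Subalgebra k A) (hτR : ∀ r ∈ R, τ r ∈ R) (T : R ⊗[k] B →+ R ⊗[k] B)
    (hT : ∀ (r : R) (b : B), T (r ⊗ₜ[k] b) = (⟨τ r, hτR r r.2⟩ : R) ⊗ₜ[k] b) :
    Function.Injective (R.val.toLinearMap.rTensor B) ∧
      ∀ x : R ⊗[k] B, T x = x ↔ ∃ b : B, x = 1 ⊗ₜ[k] b := by
  refine ⟨Module.Flat.rTensor_preserves_injective_linearMap _ Subtype.val_injective, fun x ↦ ?_⟩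
  let τR : R →ₐ[k] R := (τ.comp R.val).codRestrict R fun r ↦ hτR r r.2
  have mem_bot_of_fixed (r : R) (hr : τR r = r) : r ∈ (⊥ : Subalgebra k R) :=
    mem_bot_of_coe_mem_bot (hτ r (congrArg Subtype.val hr))
  have T_eq_rTensor : T x = τR.toLinearMap.rTensor B x := by
    induction x with
    | zero => simp only [map_zero]
    | tmul r b => exact hT r b
    | add x y hx hy => simp only [map_add, hx, hy]
  rw [T_eq_rTensor]
  exact rTensor_apply_eq_self_iff_exists_tmul
    (apply_eq_self_iff_mem_span_one mem_bot_of_fixed) x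

/-- Lemma on linear disjointness: for a `τ`-stable `K`-subalgebra `R ⊆ F` and a `k`-algebra `B`
with trivial `τ`-action, the natural map `R ⊗[k] B → F ⊗[k] B` is injective and the `τ`-fixed
elements of `R ⊗[k] B` are exactly the image of `1 ⊗ B`. -/
theorem linear_disjointness_tensor
    (F : Type*) [Field F] (τ : F →+* F)
    (k : Subfield F) (hk : ∀ a : F, a ∈ k ↔ τ a = a)
    (K : Subfield F) (hkK : (k : Set F) ⊆ (K : Set F)) (hτK : ∀ a ∈ K, τ a ∈ K)
    (R : Subalgebra k F) (hKR : (K : Set F) ⊆ (R : Set F))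
    (hτR : ∀ r ∈ R, τ r ∈ R)
    (B : Type*) [CommRing B] [Algebra k B]
    (T : (R ⊗[k] B) →+* (R ⊗[k] B))
    (hT : ∀ (r : R) (b : B),
      T (r ⊗ₜ[k] b) = (⟨τ r, hτR r r.2⟩ : R) ⊗ₜ[k] b) :
    Function.Injective
      (Algebra.TensorProduct.map R.val (AlgHom.id k B) : R ⊗[k] B →ₐ[k] F ⊗[k] B)
    ∧ ∀ x : R ⊗[k] B, T x = x ↔ ∃ b : B, x = 1 ⊗ₜ[k] b :=
  let τk : F →ₐ[k] F := { τ with commutes' := fun c ↦ (hk c).1 c.2 }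
  linear_disjointness_tensor_general τk (fun a ha ↦ Algebra.mem_bot.2 ⟨⟨a, (hk a).2 ha⟩, rfl⟩)
    R hτR T.toAddMonoidHom hT
end

section
/- Let F be a field, τ : F → F a ring homomorphism, k := F^τ its fixed field, and K a subfield of F with τ(K) ⊆ K and k ⊆ K. Let A ∈ GL_d(K) and let U ∈ GL_d(F) satisfy τ(U) = A·U (τ applied entrywise). Let R be the K-subalgebra of F generated by the entries of U together with (det U)⁻¹. Then τ(R) ⊆ R, and R is τ-simple: every ideal I of R with τ(I) ⊆ I satisfies I = (0) or I = R. -/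
set_option synthInstance.maxHeartbeats 400000
set_option maxHeartbeats 1000000

/-!
Kronecker products and direct sums of fundamental matrices are again fundamental, so every
`x ∈ R` has the form `a · W c` with `a` over `K`, `τ(c) = c`, and `W ∈ GL_n(R)` satisfying
`τ(W) = B W` for some `B` over `K`. Given `0 ≠ x = a · W c` in a `τ`-ideal `I`, let `L ⊆ Kⁿ` be the
space of all `ℓ` with `ℓ · W c ∈ I`. Then `F L W ⊆ Fⁿ` is a `τ`-stable subspace, hence spanned by
`τ`-fixed vectors: its reduced echelon basis is fixed, being determined by its entries `0` and `1`
in the pivot positions. So some fixed `b = v W` with `v ∈ F L` has `b · c ≠ 0`. Since `b` has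
entries in `K`, `v = b W⁻¹` has entries in `R`, so `v` is an `R`-combination of elements of `L`
and `b · c = v · W c ∈ I`. But `b · c` is fixed by `τ`, so it is a nonzero element of `K`.
-/

universe u

open Matrix
open scoped Kronecker

namespace PicardVessiot

section LinearAlgebra

theorem exists_basis_coord_eq {ι : Type u} {F V : Type*} [Field F] [AddCommGroup V] [Module F V]
    [FiniteDimensional F V] (f : ι → Module.Dual F V)
    (hf : Submodule.span F (Set.range f) = ⊤) :
    ∃ (κ : Type u) (a : κ → ι) (b : Module.Basis κ F V), ∀ j, b.coord j = f (a j) := by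
  classical
  obtain ⟨κ, a, -, hspan, hli⟩ := exists_linearIndependent' F f
  have : Finite κ := hli.finite
  let φ := Module.Basis.mk hli (hspan.trans hf).ge
  let b := φ.dualBasis.map (Module.evalEquiv F V).symm
  refine ⟨κ, a, b, fun j => b.ext fun l => ?_⟩
  have hφ : φ j = f (a j) := Module.Basis.mk_apply hli _ j
  calc b.coord j (b l) = if l = j then 1 else 0 := by
        rw [b.coord_apply, b.repr_self, Finsupp.single_apply]
    _ = φ.dualBasis l (φ j) := by
        rw [φ.dualBasis_apply_self]
        simp only [eq_comm]
    _ = f (a j) (b l) := by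
        rw [Module.Basis.map_apply, ← hφ, Module.apply_evalEquiv_symm_apply]

theorem span_range_proj_domRestrict {ι F : Type*} [Field F] [Finite ι]
    (M : Submodule F (ι → F)) :
    Submodule.span F (Set.range fun i => (LinearMap.proj i : (ι → F) →ₗ[F] F).domRestrict M) =
      ⊤ := by
  classical
  have := Fintype.ofFinite ι
  rw [eq_top_iff, ← LinearMap.range_eq_top.2 (Subspace.dualRestrict_surjective (W := M)),
    LinearMap.range_eq_map, ← (Pi.basisFun F ι).dualBasis.span_eq, Submodule.map_span,
    ← Set.range_comp]
  refine Submodule.span_mono (Set.range_subset_range_iff_exists_comp.2 ⟨id, ?_⟩)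
  ext i
  simp

theorem span_fixedVectors_eq {ι F : Type*} [Field F] [Finite ι] (τ : F →+* F)
    (M : Submodule F (ι → F)) (hM : ∀ x ∈ M, τ ∘ x ∈ M) :
    Submodule.span F {x | x ∈ M ∧ τ ∘ x = x} = M := by
  classical
  refine le_antisymm (Submodule.span_le.2 fun x hx => hx.1) ?_
  obtain ⟨κ, a, b, hb⟩ := exists_basis_coord_eq _ (span_range_proj_domRestrict M)
  have hrepr (x : M) (j : κ) : b.repr x j = (x : ι → F) (a j) := LinearMap.congr_fun (hb j) x
  have hfixed (l : κ) : τ ∘ (b l : ι → F) = b l := by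
    suffices (⟨_, hM _ (b l).2⟩ : M) = b l from congrArg Subtype.val this
    refine b.ext_elem fun j => ?_
    have : (b l : ι → F) (a j) = if l = j then 1 else 0 := by
      rw [← hrepr, b.repr_self, Finsupp.single_apply]
    simp only [hrepr, Function.comp_apply, this]
    split_ifs <;> simp
  calc M = (Submodule.span F (Set.range b)).map M.subtype := by simp
    _ = Submodule.span F (Set.range fun l => (b l : ι → F)) := by
      rw [Submodule.map_span, ← Set.range_comp]; rfl
    _ ≤ Submodule.span F {x | x ∈ M ∧ τ ∘ x = x} :=
      Submodule.span_mono (Set.range_subset_iff.2 fun l => ⟨(b l).2, hfixed l⟩)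

theorem exists_forall_mem_span_eq_sum_smul {ι K F : Type*} [Fintype ι] [Field K] [CommSemiring F]
    [Algebra K F] (L : Submodule K (ι → K)) :
    ∃ ℓ : ι → ι → K, (∀ i, ℓ i ∈ L) ∧
      ∀ v ∈ Submodule.span F ((algebraMap K F ∘ ·) '' (L : Set (ι → K))),
        v = ∑ i, v i • (algebraMap K F ∘ ℓ i) := by
  classical
  obtain ⟨π, hπ⟩ := L.subtype.exists_leftInverse_of_injective L.ker_subtype
  refine ⟨fun i => π (Pi.single i 1), fun i => (π _).2, fun v hv => ?_⟩
  refine LinearMap.eqOn_span' (f := LinearMap.id)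
    (g := Fintype.linearCombination F fun i => algebraMap K F ∘ (π (Pi.single i 1) : ι → K))
    ?_ hv
  rintro _ ⟨x, hx, rfl⟩
  have hx_sum : x = ∑ i, x i • (π (Pi.single i 1) : ι → K) := by
    calc x = π x := congrArg Subtype.val (LinearMap.congr_fun hπ ⟨x, hx⟩).symm
      _ = π (∑ i, x i • Pi.single i 1) := by rw [← pi_eq_sum_univ']
      _ = _ := by simp
  ext j
  simpa [Fintype.linearCombination_apply, Algebra.smul_def] using
    congrArg (algebraMap K F) (congrFun hx_sum j)

theorem exists_comp_eq_of_vecMul_eq {n R S : Type*} [Fintype n] [DecidableEq n] [CommRing R]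
    [CommRing S] (f : R →+* S) {W : Matrix n n R} (hW : IsUnit W) {v : n → S} {b : n → R}
    (hv : v ᵥ* W.map f = f ∘ b) : ∃ r : n → R, f ∘ r = v := by
  obtain ⟨V, hWV, -⟩ := isUnit_iff_exists.1 hW
  have hfWV : W.map f * V.map f = 1 := by
    rw [← Matrix.map_mul, hWV, Matrix.map_one _ (map_zero _) (map_one _)]
  refine ⟨b ᵥ* V, ?_⟩
  calc f ∘ (b ᵥ* V) = (f ∘ b) ᵥ* V.map f := funext fun i => RingHom.map_vecMul f V b i
    _ = v := by rw [← hv, vecMul_vecMul, hfWV, vecMul_one]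

theorem map_kronecker {l m n p R S : Type*} [NonAssocSemiring R] [NonAssocSemiring S]
    (f : R →+* S) (X : Matrix l m R) (Y : Matrix n p R) :
    (X ⊗ₖ Y).map f = X.map f ⊗ₖ Y.map f := by
  ext
  simp

end LinearAlgebra

variable {K R F : Type*} [Field K] [CommRing R] [Field F] [Algebra K F] [Algebra R F]
  {τ : F →+* F}

section FundamentalMatrix

variable {m n : Type*} [Fintype m] [Fintype n] [DecidableEq m] [DecidableEq n]

variable (K τ) in
/-- `W ∈ GL_n(R)` is a fundamental solution matrix of some linear difference system `τ(Y) = B Y`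
with coefficients in `K`. The equation is read in `F`, so `τ` need not preserve `R`. -/
structure IsFundamentalMatrix (W : Matrix n n R) : Prop where
  isUnit : IsUnit W
  exists_map_eq_mul : ∃ B : Matrix n n K,
    (W.map (algebraMap R F)).map τ = B.map (algebraMap K F) * W.map (algebraMap R F)

namespace IsFundamentalMatrix

theorem one : IsFundamentalMatrix K τ (1 : Matrix n n R) :=
  ⟨isUnit_one, 1, by simp [Matrix.map_one]⟩

theorem kronecker {W : Matrix m m R} {W' : Matrix n n R} (hW : IsFundamentalMatrix K τ W)
    (hW' : IsFundamentalMatrix K τ W') : IsFundamentalMatrix K τ (W ⊗ₖ W') := by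
  obtain ⟨B, hB⟩ := hW.exists_map_eq_mul
  obtain ⟨B', hB'⟩ := hW'.exists_map_eq_mul
  refine ⟨hW.isUnit.kronecker hW'.isUnit, B ⊗ₖ B', ?_⟩
  rw [map_kronecker, map_kronecker, map_kronecker, hB, hB', mul_kronecker_mul]

theorem fromBlocks {W : Matrix m m R} {W' : Matrix n n R} (hW : IsFundamentalMatrix K τ W)
    (hW' : IsFundamentalMatrix K τ W') : IsFundamentalMatrix K τ (fromBlocks W 0 0 W') := by
  obtain ⟨B, hB⟩ := hW.exists_map_eq_mul
  obtain ⟨B', hB'⟩ := hW'.exists_map_eq_mul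
  refine ⟨isUnit_fromBlocks_zero₂₁.2 ⟨hW.isUnit, hW'.isUnit⟩, Matrix.fromBlocks B 0 0 B', ?_⟩
  simp [fromBlocks_map, fromBlocks_multiply, hB, hB']

end IsFundamentalMatrix

variable (K R τ) in
/-- The entries in `F` of all fundamental matrices over `R`, of any size. Index types in `Type`
suffice, since they are closed under the products and sums formed by Kronecker products and
direct sums. -/
def fundamentalEntries : Submonoid F where
  carrier := {x | ∃ (n : Type) (_ : Fintype n) (_ : DecidableEq n) (W : Matrix n n R),
    IsFundamentalMatrix K τ W ∧ ∃ i j, algebraMap R F (W i j) = x}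
  one_mem' := ⟨Unit, _, inferInstance, 1, .one, (), (), by simp⟩
  mul_mem' := by
    rintro _ _ ⟨m, _, _, W, hW, i, j, rfl⟩ ⟨n, _, _, W', hW', i', j', rfl⟩
    exact ⟨m × n, inferInstance, inferInstance, W ⊗ₖ W', hW.kronecker hW', (i, i'), (j, j'),
      by simp⟩

theorem inv_det_mem_fundamentalEntries {n : Type} [Fintype n] [DecidableEq n]
    {W : Matrix n n R} (hW : IsFundamentalMatrix K τ W) :
    (algebraMap R F W.det)⁻¹ ∈ fundamentalEntries K R τ := by
  obtain ⟨B, hB⟩ := hW.exists_map_eq_mul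
  obtain ⟨u, hu⟩ := W.isUnit_iff_isUnit_det.1 hW.isUnit
  have hdet : τ (algebraMap R F u) = algebraMap K F B.det * algebraMap R F u := by
    simp only [hu, RingHom.map_det, RingHom.mapMatrix_apply, hB, det_mul]
  refine ⟨Unit, _, inferInstance, of fun _ _ => (u⁻¹ : Rˣ), ⟨?_, of fun _ _ => B.det⁻¹, ?_⟩,
    (), (), ?_⟩
  · simp [isUnit_iff_isUnit_det]
  · ext
    simp [mul_apply, map_units_inv, hdet, mul_comm]
  · simp [map_units_inv, hu]

theorem exists_eq_dotProduct_mulVec_of_mem_span {x : F}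
    (hx : x ∈ Submodule.span K (fundamentalEntries K R τ : Set F)) :
    ∃ (n : Type) (_ : Fintype n) (_ : DecidableEq n) (W : Matrix n n R) (a : n → K) (c : n → F),
      IsFundamentalMatrix K τ W ∧ τ ∘ c = c ∧
        (algebraMap K F ∘ a) ⬝ᵥ (W.map (algebraMap R F) *ᵥ c) = x := by
  induction hx using Submodule.span_induction with
  | mem x hx =>
    obtain ⟨n, _, _, W, hW, i, j, rfl⟩ := hx
    refine ⟨n, _, _, W, Pi.single i 1, Pi.single j 1, hW, ?_, ?_⟩
    · ext l
      obtain rfl | hl := eq_or_ne l j <;> simp [*]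
    · have : algebraMap K F ∘ Pi.single i 1 = Pi.single i 1 := by
        ext l
        obtain rfl | hl := eq_or_ne l i <;> simp [*]
      simp [this]
  | zero => exact ⟨Unit, _, inferInstance, 1, 0, 0, .one, by ext; simp, by simp⟩
  | add _ _ _ _ hx hy =>
    obtain ⟨m, _, _, W, a, c, hW, hc, rfl⟩ := hx
    obtain ⟨n, _, _, W', a', c', hW', hc', rfl⟩ := hy
    refine ⟨m ⊕ n, inferInstance, inferInstance, fromBlocks W 0 0 W', Sum.elim a a',
      Sum.elim c c', hW.fromBlocks hW', ?_, ?_⟩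
    · rw [Sum.comp_elim, hc, hc']
    · simp [Sum.comp_elim, fromBlocks_map, fromBlocks_mulVec]
  | smul r _ _ hx =>
    obtain ⟨n, _, _, W, a, c, hW, hc, rfl⟩ := hx
    refine ⟨n, _, _, W, r • a, c, hW, hc, ?_⟩
    have : algebraMap K F ∘ (r • a) = r • (algebraMap K F ∘ a) := by
      ext; simp [Algebra.smul_def]
    rw [this, smul_dotProduct]

end FundamentalMatrix

section CoeffSpace

variable [Algebra K R] [IsScalarTower K R F] {n : Type*} [Fintype n]

variable (K) in
/-- The space of coefficient vectors `ℓ` over `K` with `∑ i, ℓ i • w i ∈ J`: for `w = W c` and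
`J` a `τ`-ideal, the space `L` of the header. -/
def coeffSpace (J : Submodule R F) (w : n → F) : Submodule K (n → K) :=
  (J.restrictScalars K).comap (Fintype.linearCombination K w)

variable (K) in
/-- The `F`-subspace of `n → F` spanned by `coeffSpace K J w`, that is, its scalar extension
to `F`. The fixed vectors are found in its image under `W`. -/
def coeffSpan (J : Submodule R F) (w : n → F) : Submodule F (n → F) :=
  Submodule.span F ((algebraMap K F ∘ ·) '' (coeffSpace K J w : Set (n → K)))

variable {J : Submodule R F} {w : n → F}

theorem mem_coeffSpace {ℓ : n → K} :
    ℓ ∈ coeffSpace K J w ↔ (algebraMap K F ∘ ℓ) ⬝ᵥ w ∈ J := by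
  simp [coeffSpace, Fintype.linearCombination_apply, dotProduct, Algebra.smul_def]

theorem dotProduct_mem_of_mem_coeffSpan {r : n → R}
    (hr : algebraMap R F ∘ r ∈ coeffSpan K J w) : (algebraMap R F ∘ r) ⬝ᵥ w ∈ J := by
  obtain ⟨ℓ, hℓ, hsum⟩ := exists_forall_mem_span_eq_sum_smul (F := F) (coeffSpace K J w)
  rw [hsum _ hr, sum_dotProduct]
  refine J.sum_mem fun i _ => ?_
  rw [smul_dotProduct, Function.comp_apply, algebraMap_smul]
  exact J.smul_mem _ (mem_coeffSpace.1 (hℓ i))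

theorem comp_vecMul_mem_coeffSpan (hτK : ∀ a : K, τ (algebraMap K F a) ∈ (algebraMap K F).range)
    (hJ : ∀ x ∈ J, τ x ∈ J) {B : Matrix n n K} (hw : τ ∘ w = B.map (algebraMap K F) *ᵥ w)
    {v : n → F} (hv : v ∈ coeffSpan K J w) :
    (τ ∘ v) ᵥ* B.map (algebraMap K F) ∈ coeffSpan K J w := by
  induction hv using Submodule.span_induction with
  | mem _ hv =>
    obtain ⟨ℓ, hℓ, rfl⟩ := hv
    choose ℓτ hℓτ using fun i => hτK (ℓ i)
    have hcomp : algebraMap K F ∘ (ℓτ ᵥ* B) =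
        (τ ∘ algebraMap K F ∘ ℓ) ᵥ* B.map (algebraMap K F) := by
      have : τ ∘ algebraMap K F ∘ ℓ = algebraMap K F ∘ ℓτ := funext fun i => (hℓτ i).symm
      rw [this]
      exact funext fun i => RingHom.map_vecMul _ B ℓτ i
    refine Submodule.subset_span ⟨ℓτ ᵥ* B, mem_coeffSpace.2 ?_, hcomp⟩
    rw [hcomp, ← dotProduct_mulVec, ← hw, ← RingHom.map_dotProduct]
    exact hJ _ (mem_coeffSpace.1 hℓ)
  | zero =>
    have : τ ∘ (0 : n → F) = 0 := funext fun _ => map_zero τ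
    rw [this, zero_vecMul]
    exact zero_mem _
  | add u v _ _ hu hv =>
    have : τ ∘ (u + v) = τ ∘ u + τ ∘ v := funext fun _ => map_add τ _ _
    rw [this, add_vecMul]
    exact add_mem hu hv
  | smul a v _ hv =>
    have : τ ∘ (a • v) = τ a • (τ ∘ v) := funext fun _ => map_mul τ _ _
    rw [this, smul_vecMul]
    exact Submodule.smul_mem _ _ hv

theorem comp_mem_map_coeffSpan (hτK : ∀ a : K, τ (algebraMap K F a) ∈ (algebraMap K F).range)
    (hJ : ∀ x ∈ J, τ x ∈ J) {B : Matrix n n K} {W : Matrix n n F}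
    (hW : W.map τ = B.map (algebraMap K F) * W) {c : n → F} (hc : τ ∘ c = c)
    {x : n → F} (hx : x ∈ (coeffSpan K J (W *ᵥ c)).map W.vecMulLinear) :
    τ ∘ x ∈ (coeffSpan K J (W *ᵥ c)).map W.vecMulLinear := by
  obtain ⟨v, hv, rfl⟩ := hx
  have hw : τ ∘ (W *ᵥ c) = B.map (algebraMap K F) *ᵥ (W *ᵥ c) := by
    rw [mulVec_mulVec, ← hW]
    nth_rw 2 [← hc]
    exact funext fun i => RingHom.map_mulVec τ W c i
  refine ⟨(τ ∘ v) ᵥ* B.map (algebraMap K F), comp_vecMul_mem_coeffSpan hτK hJ hw hv, ?_⟩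
  rw [vecMulLinear_apply, vecMul_vecMul, ← hW]
  exact funext fun i => (RingHom.map_vecMul τ W v i).symm

theorem exists_fixed_dotProduct_ne_zero
    (hτK : ∀ a : K, τ (algebraMap K F a) ∈ (algebraMap K F).range)
    (hJ : ∀ x ∈ J, τ x ∈ J) {B : Matrix n n K} {W : Matrix n n F}
    (hW : W.map τ = B.map (algebraMap K F) * W) {c : n → F} (hc : τ ∘ c = c) {a : n → K}
    (ha : (algebraMap K F ∘ a) ⬝ᵥ (W *ᵥ c) ∈ J) (ha0 : (algebraMap K F ∘ a) ⬝ᵥ (W *ᵥ c) ≠ 0) :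
    ∃ v ∈ coeffSpan K J (W *ᵥ c), τ ∘ (v ᵥ* W) = v ᵥ* W ∧ v ⬝ᵥ (W *ᵥ c) ≠ 0 := by
  let M := (coeffSpan K J (W *ᵥ c)).map W.vecMulLinear
  have hspan := span_fixedVectors_eq τ M fun x hx => comp_mem_map_coeffSpan hτK hJ hW hc hx
  by_contra! hzero
  have hM : M ≤ LinearMap.ker (dotProductBilin F F c) := by
    rw [← hspan, Submodule.span_le]
    rintro _ ⟨⟨v, hv, rfl⟩, hfix⟩
    have := hzero v hv hfix
    rwa [dotProduct_mulVec, dotProduct_comm] at this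
  have ha_mem : (algebraMap K F ∘ a) ᵥ* W ∈ M :=
    ⟨_, Submodule.subset_span ⟨a, mem_coeffSpace.2 ha, rfl⟩, rfl⟩
  rw [dotProduct_mulVec, dotProduct_comm] at ha0
  exact ha0 (hM ha_mem)

theorem one_mem_of_dotProduct_mulVec_mem [DecidableEq n] {W : Matrix n n R}
    (hW : IsFundamentalMatrix K τ W)
    (hτK : ∀ a : K, τ (algebraMap K F a) ∈ (algebraMap K F).range)
    (hfix : ∀ x : F, τ x = x → x ∈ (algebraMap K F).range)
    (hJ : ∀ x ∈ J, τ x ∈ J) {a : n → K} {c : n → F} (hc : τ ∘ c = c)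
    (ha : (algebraMap K F ∘ a) ⬝ᵥ (W.map (algebraMap R F) *ᵥ c) ∈ J)
    (ha0 : (algebraMap K F ∘ a) ⬝ᵥ (W.map (algebraMap R F) *ᵥ c) ≠ 0) : 1 ∈ J := by
  obtain ⟨B, hB⟩ := hW.exists_map_eq_mul
  obtain ⟨v, hv, hvfix, hv0⟩ := exists_fixed_dotProduct_ne_zero hτK hJ hB hc ha ha0
  choose b hb using fun i => hfix _ (congrFun hvfix i)
  have hvW : v ᵥ* W.map (algebraMap R F) = algebraMap R F ∘ algebraMap K R ∘ b := by
    ext i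
    rw [← hb, IsScalarTower.algebraMap_apply K R F, Function.comp_apply, Function.comp_apply]
  obtain ⟨r, rfl⟩ := exists_comp_eq_of_vecMul_eq _ hW.isUnit hvW
  obtain ⟨y, hy⟩ := hfix ((algebraMap R F ∘ r) ⬝ᵥ (W.map (algebraMap R F) *ᵥ c)) (by
    rw [dotProduct_mulVec, RingHom.map_dotProduct, hvfix, hc])
  have hyJ : algebraMap K F y ∈ J := hy ▸ dotProduct_mem_of_mem_coeffSpan hv
  have hy0 : y ≠ 0 := by
    rintro rfl
    exact hv0 (by rw [← hy, map_zero])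
  have := (J.restrictScalars K).smul_mem y⁻¹ hyJ
  rwa [Algebra.smul_def, ← map_mul, inv_mul_cancel₀ hy0, map_one] at this

theorem one_mem_of_le_span_fundamentalEntries
    (hτK : ∀ a : K, τ (algebraMap K F a) ∈ (algebraMap K F).range)
    (hfix : ∀ x : F, τ x = x → x ∈ (algebraMap K F).range)
    (hJ : ∀ x ∈ J, τ x ∈ J) (hJ0 : J ≠ ⊥)
    (hspan : J.restrictScalars K ≤ Submodule.span K (fundamentalEntries K R τ : Set F)) :
    1 ∈ J := by
  obtain ⟨x, hx, hx0⟩ := J.exists_mem_ne_zero_of_ne_bot hJ0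
  obtain ⟨n, _, _, W, a, c, hW, hc, rfl⟩ := exists_eq_dotProduct_mulVec_of_mem_span (hspan hx)
  exact one_mem_of_dotProduct_mulVec_mem hW hτK hfix hJ hc hx hx0

end CoeffSpace

section Stability

variable [Algebra K R] [IsScalarTower K R F]

theorem IsFundamentalMatrix.map_apply_mem_range
    {n : Type*} [Fintype n] [DecidableEq n] {W : Matrix n n R}
    (hW : IsFundamentalMatrix K τ W) (i j : n) :
    τ (algebraMap R F (W i j)) ∈ (algebraMap R F).range := by
  obtain ⟨B, hB⟩ := hW.exists_map_eq_mul
  refine ⟨(B.map (algebraMap K R) * W) i j, ?_⟩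
  simpa [mul_apply, ← IsScalarTower.algebraMap_apply K R F] using (congrFun₂ hB i j).symm

theorem map_mem_range_of_mem_span_fundamentalEntries
    (hτK : ∀ a : K, τ (algebraMap K F a) ∈ (algebraMap K F).range) {x : F}
    (hx : x ∈ Submodule.span K (fundamentalEntries K R τ : Set F)) :
    τ x ∈ (algebraMap R F).range := by
  induction hx using Submodule.span_induction with
  | mem x hx =>
    obtain ⟨n, _, _, W, hW, i, j, rfl⟩ := hx
    exact hW.map_apply_mem_range i j
  | zero => rw [map_zero]; exact zero_mem _
  | add _ _ _ _ hx hy => rw [map_add]; exact add_mem hx hy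
  | smul a x _ hx =>
    rw [Algebra.smul_def, map_mul]
    obtain ⟨b, hb⟩ := hτK a
    refine mul_mem ⟨algebraMap K R b, ?_⟩ hx
    rw [← IsScalarTower.algebraMap_apply, hb]

end Stability

section Subalgebra

variable {R : Subalgebra K F}

theorem exists_isFundamentalMatrix_map_eq {n : Type*} [Fintype n] [DecidableEq n]
    {A : Matrix n n K} {U : Matrix n n F} (hU : U.map τ = A.map (algebraMap K F) * U)
    (hUR : ∀ i j, U i j ∈ R) (hdet : U.det ≠ 0) (hdetR : U.det⁻¹ ∈ R) :
    ∃ W : Matrix n n R, IsFundamentalMatrix K τ W ∧ W.map (algebraMap R F) = U := by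
  let W : Matrix n n R := of fun i j => ⟨U i j, hUR i j⟩
  have hWdet : (W.det : F) = U.det := RingHom.map_det (algebraMap R F) W
  have hWunit : IsUnit W := by
    refine W.isUnit_iff_isUnit_det.2 (IsUnit.of_mul_eq_one ⟨_, hdetR⟩ (Subtype.ext ?_))
    simp [hWdet, hdet]
  exact ⟨W, ⟨hWunit, A, hU⟩, rfl⟩

theorem adjoin_le_span_fundamentalEntries {n : Type} [Fintype n] [DecidableEq n]
    {A : Matrix n n K} {U : Matrix n n F} (hU : U.map τ = A.map (algebraMap K F) * U)
    (hdet : U.det ≠ 0)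
    (hR : R = Algebra.adjoin K ((Set.range fun p : n × n => U p.1 p.2) ∪ {U.det⁻¹})) :
    R.toSubmodule ≤ Submodule.span K (fundamentalEntries K R τ : Set F) := by
  have hgen : (Set.range fun p : n × n => U p.1 p.2) ∪ {U.det⁻¹} ⊆ (R : Set F) :=
    hR ▸ Algebra.subset_adjoin
  obtain ⟨W, hW, hWU⟩ := exists_isFundamentalMatrix_map_eq hU
    (fun i j => hgen (.inl ⟨(i, j), rfl⟩)) hdet (hgen (.inr rfl))
  nth_rw 1 [hR]
  rw [Algebra.adjoin_eq_span]
  refine Submodule.span_mono (Submonoid.closure_le.2 ?_)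
  rintro _ (⟨⟨i, j⟩, rfl⟩ | rfl)
  · exact ⟨n, _, _, W, hW, i, j, congrFun₂ hWU i j⟩
  · rw [← hWU, ← RingHom.mapMatrix_apply, ← RingHom.map_det]
    exact inv_det_mem_fundamentalEntries hW

theorem eq_bot_or_eq_top_of_le_span_fundamentalEntries
    (hτK : ∀ a : K, τ (algebraMap K F a) ∈ (algebraMap K F).range)
    (hfix : ∀ x : F, τ x = x → x ∈ (algebraMap K F).range)
    (hspan : R.toSubmodule ≤ Submodule.span K (fundamentalEntries K R τ : Set F))
    {I : Ideal R} (hI : ∀ x ∈ I, ∃ y ∈ I, (y : F) = τ x) : I = ⊥ ∨ I = ⊤ := by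
  rw [or_iff_not_imp_left]
  intro hI0
  let J : Submodule R F := Submodule.map (Algebra.linearMap R F) I
  have hJ : ∀ x ∈ J, τ x ∈ J := by
    rintro _ ⟨x, hx, rfl⟩
    exact hI x hx
  have hJ0 : J ≠ ⊥ := by
    rwa [Ne, ← Submodule.map_bot (Algebra.linearMap R F),
      (Submodule.map_injective_of_injective Subtype.val_injective).eq_iff]
  have hJR : J.restrictScalars K ≤ R.toSubmodule := by
    rintro _ ⟨x, -, rfl⟩
    exact x.2
  obtain ⟨y, hy, hy1⟩ := one_mem_of_le_span_fundamentalEntries hτK hfix hJ hJ0 (hJR.trans hspan)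
  rw [Ideal.eq_top_iff_one]
  rwa [show y = 1 from Subtype.ext hy1] at hy

end Subalgebra

end PicardVessiot

open PicardVessiot in
/-- The `K`-subalgebra `R = K[U, (det U)⁻¹]` of `F` generated by the entries of a fundamental
solution matrix `U` of `τ(Y) = A·Y` (with `A ∈ GL_d(K)`) together with `(det U)⁻¹` is stable
under `τ` and is `τ`-simple. -/
theorem picardVessiot_ring_tau_simple
    (F : Type*) [Field F] (τ : F →+* F)
    (k : Subfield F) (hk : ∀ a : F, a ∈ k ↔ τ a = a)
    (K : Subfield F) (hkK : (k : Set F) ⊆ (K : Set F)) (hτK : ∀ a ∈ K, τ a ∈ K)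
    (d : ℕ) (A U : Matrix (Fin d) (Fin d) F)
    (hA : ∀ i j, A i j ∈ K) (hAdet : A.det ≠ 0) (hUdet : U.det ≠ 0)
    (hU : U.map τ = A * U)
    (R : Subalgebra K F)
    (hR : R = Algebra.adjoin K
      ((Set.range fun p : Fin d × Fin d => U p.1 p.2) ∪ {(U.det)⁻¹})) :
    (∀ x ∈ R, τ x ∈ R) ∧
    ∀ I : Ideal R,
      (∀ x : R, x ∈ I → ∀ hx : τ (x : F) ∈ R, (⟨τ (x : F), hx⟩ : R) ∈ I) →
      I = ⊥ ∨ I = ⊤ := by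
  have hτK' (a : K) : τ (algebraMap K F a) ∈ (algebraMap K F).range :=
    ⟨⟨_, hτK a a.2⟩, rfl⟩
  have hfix (x : F) (hx : τ x = x) : x ∈ (algebraMap K F).range :=
    ⟨⟨x, hkK ((hk x).2 hx)⟩, rfl⟩
  have hU' : U.map τ = (of fun i j => (⟨A i j, hA i j⟩ : K)).map (algebraMap K F) * U := hU
  have hspan := adjoin_le_span_fundamentalEntries hU' hUdet hR
  have hstable (x : F) (hx : x ∈ R) : τ x ∈ R := by
    obtain ⟨y, hy⟩ := map_mem_range_of_mem_span_fundamentalEntries hτK' (hspan hx)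
    exact hy ▸ y.2
  exact ⟨hstable, fun I hI => eq_bot_or_eq_top_of_le_span_fundamentalEntries hτK' hfix hspan
    fun x hx => ⟨_, hI x hx (hstable x x.2), rfl⟩⟩
end

section
/- Let F be a field, τ : F → F a ring homomorphism, k := F^τ its fixed field, and K a subfield of F with τ(K) ⊆ K and k ⊆ K. Let A ∈ GL_d(K) and suppose U, V ∈ GL_d(F) both satisfy τ(U) = A·U and τ(V) = A·V (τ applied entrywise). Then U⁻¹V ∈ GL_d(k) (i.e. every entry of U⁻¹V lies in the fixed field k), and consequently the K-subalgebra of F generated by the entries of U and (det U)⁻¹ coincides with the K-subalgebra of F generated by the entries of V and (det V)⁻¹. -/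
set_option synthInstance.maxHeartbeats 400000
set_option maxHeartbeats 1000000

/-!
If `τ(U) = A U` and `τ(V) = A V`, then `C = U⁻¹ V` satisfies `τ(U) τ(C) = A V = τ(U) C`, and
cancelling the invertible `τ(U)` shows that `C` is fixed by `τ`; by symmetry so is `C⁻¹ = V⁻¹ U`.
Hence `V = U C` and `U = V C⁻¹` with coefficients from the base, and each of the two algebras
contains the generators of the other.
-/

section CommRing

variable {R S n : Type*} [CommRing R] [CommRing S] [Algebra R S] [Fintype n] [DecidableEq n]

theorem map_inv_mul_eq_of_map_eq_mul {τ : S →+* S} {A U V : Matrix n n S} (hUdet : IsUnit U.det)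
    (hU : U.map τ = A * U) (hV : V.map τ = A * V) : (U⁻¹ * V).map τ = U⁻¹ * V := by
  have hU_unit : IsUnit (U.map τ) := ((Matrix.isUnit_iff_isUnit_det U).mpr hUdet).map τ.mapMatrix
  have hUC : U * (U⁻¹ * V) = V := Matrix.mul_nonsing_inv_cancel_left U V hUdet
  refine hU_unit.mul_left_cancel ?_
  calc U.map τ * (U⁻¹ * V).map τ
      = V.map τ := by rw [← Matrix.map_mul, hUC]
    _ = A * (U * (U⁻¹ * V)) := by rw [hUC, hV]
    _ = U.map τ * (U⁻¹ * V) := by rw [hU, Matrix.mul_assoc]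

theorem det_mem_of_forall_apply_mem {σ : Type*} [SetLike σ S] [SubringClass σ S] {B : σ}
    {M : Matrix n n S} (hM : ∀ i j, M i j ∈ B) : M.det ∈ B := by
  rw [Matrix.det_apply']
  exact sum_mem fun π _ => mul_mem (intCast_mem B _) (prod_mem fun i _ => hM (π i) i)

/-- The `R`-subalgebra `R[U, (det U)⁻¹]` of `S`; when `U` is a fundamental solution matrix of a
system `τ(Y) = A Y`, it is the Picard–Vessiot ring of that system inside `S`. The inverse is
`Ring.inverse`, which is `0` when `det U` is not a unit. -/
def picardVessiotAlgebra (R : Type*) {S n : Type*} [CommRing R] [CommRing S] [Algebra R S]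
    [Fintype n] [DecidableEq n] (U : Matrix n n S) : Subalgebra R S :=
  Algebra.adjoin R ((Set.range fun p : n × n => U p.1 p.2) ∪ {Ring.inverse U.det})

theorem apply_mem_picardVessiotAlgebra (U : Matrix n n S) (i j : n) :
    U i j ∈ picardVessiotAlgebra R U :=
  Algebra.subset_adjoin (Or.inl ⟨(i, j), rfl⟩)

theorem inverse_det_mem_picardVessiotAlgebra (U : Matrix n n S) :
    Ring.inverse U.det ∈ picardVessiotAlgebra R U :=
  Algebra.subset_adjoin (Or.inr rfl)

theorem picardVessiotAlgebra_le_iff {U : Matrix n n S} {B : Subalgebra R S} :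
    picardVessiotAlgebra R U ≤ B ↔ (∀ i j, U i j ∈ B) ∧ Ring.inverse U.det ∈ B := by
  simp only [picardVessiotAlgebra, Algebra.adjoin_le_iff, Set.union_subset_iff,
    Set.range_subset_iff, Prod.forall, Set.singleton_subset_iff, SetLike.mem_coe]

theorem picardVessiotAlgebra_mul_le {U C : Matrix n n S}
    (hC : ∀ i j, C i j ∈ picardVessiotAlgebra R U)
    (hCinv : ∀ i j, C⁻¹ i j ∈ picardVessiotAlgebra R U) :
    picardVessiotAlgebra R (U * C) ≤ picardVessiotAlgebra R U := by
  refine picardVessiotAlgebra_le_iff.mpr ⟨fun i j => ?_, ?_⟩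
  · rw [Matrix.mul_apply]
    exact sum_mem fun l _ => mul_mem (apply_mem_picardVessiotAlgebra U i l) (hC l j)
  · rw [Matrix.det_mul, Ring.mul_inverse_rev, ← Matrix.det_nonsing_inv]
    exact mul_mem (det_mem_of_forall_apply_mem hCinv) (inverse_det_mem_picardVessiotAlgebra U)

theorem picardVessiotAlgebra_le_of_map_eq_mul {τ : S →+* S}
    (hfix : ∀ a, τ a = a → a ∈ (⊥ : Subalgebra R S)) {A U V : Matrix n n S}
    (hUdet : IsUnit U.det) (hVdet : IsUnit V.det)
    (hU : U.map τ = A * U) (hV : V.map τ = A * V) :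
    picardVessiotAlgebra R V ≤ picardVessiotAlgebra R U := by
  have mem_of_map_eq {M : Matrix n n S} (hM : M.map τ = M) (i j : n) :
      M i j ∈ picardVessiotAlgebra R U :=
    (bot_le : ⊥ ≤ picardVessiotAlgebra R U) (hfix _ (congrFun₂ hM i j))
  have hCinv : (U⁻¹ * V)⁻¹ = V⁻¹ * U := by
    rw [Matrix.mul_inv_rev, Matrix.nonsing_inv_nonsing_inv U hUdet]
  rw [← Matrix.mul_nonsing_inv_cancel_left U V hUdet]
  refine picardVessiotAlgebra_mul_le (mem_of_map_eq ?_) (mem_of_map_eq ?_)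
  · exact map_inv_mul_eq_of_map_eq_mul hUdet hU hV
  · rw [hCinv]
    exact map_inv_mul_eq_of_map_eq_mul hVdet hV hU

theorem picardVessiot_ring_unique_inside_F_general {τ : S →+* S}
    (hfix : ∀ a, τ a = a → a ∈ (⊥ : Subalgebra R S)) {A U V : Matrix n n S}
    (hUdet : IsUnit U.det) (hVdet : IsUnit V.det)
    (hU : U.map τ = A * U) (hV : V.map τ = A * V) :
    (∀ i j, τ ((U⁻¹ * V) i j) = (U⁻¹ * V) i j) ∧
      picardVessiotAlgebra R U = picardVessiotAlgebra R V :=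
  ⟨congrFun₂ (map_inv_mul_eq_of_map_eq_mul hUdet hU hV),
    le_antisymm (picardVessiotAlgebra_le_of_map_eq_mul hfix hVdet hUdet hV hU)
      (picardVessiotAlgebra_le_of_map_eq_mul hfix hUdet hVdet hU hV)⟩

end CommRing

/-- If `U, V ∈ GL_d(F)` are two fundamental solutions of the same system `τ(Y) = A·Y`, then all
entries of `U⁻¹V` lie in the fixed field `k`, and the `K`-subalgebras
`K[U, (det U)⁻¹]` and `K[V, (det V)⁻¹]` of `F` coincide. -/
theorem picardVessiot_ring_unique_inside_F
    (F : Type*) [Field F] (τ : F →+* F)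
    (k : Subfield F) (hk : ∀ a : F, a ∈ k ↔ τ a = a)
    (K : Subfield F) (hkK : (k : Set F) ⊆ (K : Set F)) (hτK : ∀ a ∈ K, τ a ∈ K)
    (d : ℕ) (A U V : Matrix (Fin d) (Fin d) F)
    (hA : ∀ i j, A i j ∈ K) (hAdet : A.det ≠ 0)
    (hUdet : U.det ≠ 0) (hVdet : V.det ≠ 0)
    (hU : U.map τ = A * U) (hV : V.map τ = A * V) :
    (∀ i j, (U⁻¹ * V) i j ∈ k) ∧
    Algebra.adjoin K ((Set.range fun p : Fin d × Fin d => U p.1 p.2) ∪ {(U.det)⁻¹}) =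
      Algebra.adjoin K ((Set.range fun p : Fin d × Fin d => V p.1 p.2) ∪ {(V.det)⁻¹}) := by
  have hfix (a : F) (ha : τ a = a) : a ∈ (⊥ : Subalgebra K F) :=
    Algebra.mem_bot.mpr ⟨⟨a, hkK ((hk a).mpr ha)⟩, rfl⟩
  simpa only [hk, picardVessiotAlgebra, Ring.inverse_eq_inv] using
    picardVessiot_ring_unique_inside_F_general hfix hUdet.isUnit hVdet.isUnit hU hV
end

section
/- Let F be a field of characteristic zero, τ : F → F a ring homomorphism, k := F^τ its fixed field, and K a subfield of F with τ(K) ⊆ K and k ⊆ K. Let f₁, …, f_d ∈ K be nonzero and let z₁, …, z_d ∈ F satisfy τ(z_i) = z_i + f_i for i = 1, …, d. Then the following are equivalent: (1) there exist λ₁, …, λ_d ∈ k, not all zero, and g ∈ K such that λ₁f₁ + ⋯ + λ_d f_d = τ(g) − g; (2) there exist λ₁, …, λ_d ∈ k, not all zero, such that λ₁z₁ + ⋯ + λ_d z_d ∈ K; (3) there exist λ₁, …, λ_d ∈ K, not all zero, such that λ₁z₁ + ⋯ + λ_d z_d ∈ K; (4) z₁, …, z_d are algebraically dependent over K. -/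
set_option synthInstance.maxHeartbeats 400000
set_option maxHeartbeats 1000000

/-!
Extend `τ` from `K` to an endomorphism `T` of `K[X₁, …, X_d]` by `T X_i = X_i + f_i`, so that
evaluation at `z` intertwines `T` with `τ`. In every monomial order `T` fixes leading monomials and
acts on leading coefficients by `τ`. Hence, for a monic algebraic relation `p` of minimal degree,
`T p - p` is a relation of smaller degree, so `T p = p`. Since `T` commutes with partial
derivatives, all derivatives of `p` are again fixed by `T`, and in characteristic zero one of them
is a nonconstant affine polynomial `∑ λ_i X_i + c`. Comparing it with its image under `T` gives
`τ λ_i = λ_i` and `∑ λ_i f_i = τ (-c) - (-c)`.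
-/

open MvPolynomial
open scoped MonomialOrder

section PartialDerivatives

variable {ι R : Type*}

lemma totalDegree_pderiv_lt [CommSemiring R] {p : MvPolynomial ι R} (hp : p.totalDegree ≠ 0)
    (i : ι) : (pderiv i p).totalDegree < p.totalDegree := by
  refine (Finset.sup_lt_iff (Nat.pos_of_ne_zero hp)).2 fun t ht => ?_
  have ht' : t + Finsupp.single i 1 ∈ p.support := by
    rw [mem_support_iff, coeff_pderiv] at ht
    exact mem_support_iff.2 (left_ne_zero_of_mul ht)
  have hdeg : (t + Finsupp.single i 1).degree ≤ p.totalDegree := le_totalDegree ht'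
  rw [map_add, Finsupp.degree_single] at hdeg
  exact hdeg

lemma eq_C_of_forall_pderiv_eq_zero [CommRing R] [IsAddTorsionFree R] {p : MvPolynomial ι R}
    (hp : ∀ i, pderiv i p = 0) : p = C (coeff 0 p) := by
  refine MvPolynomial.coe_injective ι R (MvPowerSeries.pderiv.ext (fun i => ?_) ?_)
  · rw [MvPowerSeries.pderiv_coe, MvPowerSeries.pderiv_coe, hp, pderiv_C]
  · rw [← MvPowerSeries.coeff_zero_eq_constantCoeff, coeff_coe, coeff_coe]
    simp

lemma pderiv_sum_C_mul_X [CommSemiring R] [Fintype ι] (lam : ι → R) (j : ι) :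
    pderiv j (∑ i, C (lam i) * X i) = C (lam j) := by
  classical
  simp [pderiv_X, Pi.single_apply]

lemma not_algebraicIndependent_of_sum_smul_eq_algebraMap [CommRing R] {A : Type*} [CommRing A]
    [Algebra R A] [Fintype ι] {z : ι → A} {lam : ι → R} {b : R} {j : ι} (hj : lam j ≠ 0)
    (h : ∑ i, lam i • z i = algebraMap R A b) : ¬ AlgebraicIndependent R z := by
  intro hz
  have hrel : ∑ i, C (lam i) * X i = (C b : MvPolynomial ι R) :=
    hz (by simpa [Algebra.smul_def] using h)
  have hderiv := congrArg (pderiv j) hrel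
  rw [pderiv_sum_C_mul_X, pderiv_C, C_eq_zero] at hderiv
  exact hj hderiv

end PartialDerivatives

section TwistedShift

variable {ι R : Type*}

/-- The endomorphism of `R[X_i]` extending `σ : R →+* R` by `X_i ↦ X_i + f i`, i.e. the universal
difference ring extension of `(R, σ)` by solutions of the equations `σ x_i = x_i + f i`. -/
noncomputable def twistedShift [CommSemiring R] (σ : R →+* R) (f : ι → R) :
    MvPolynomial ι R →+* MvPolynomial ι R :=
  eval₂Hom (C.comp σ) fun i => X i + C (f i)

section CommSemiring

variable [CommSemiring R] (σ : R →+* R) (f : ι → R)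

@[simp]
lemma twistedShift_C (a : R) : twistedShift σ f (C a) = C (σ a) := by
  simp [twistedShift]

@[simp]
lemma twistedShift_X (i : ι) : twistedShift σ f (X i) = X i + C (f i) := by
  simp [twistedShift]

lemma aeval_twistedShift {A : Type*} [CommSemiring A] [Algebra R A] {τ : A →+* A} {z : ι → A}
    (hτ : ∀ a, τ (algebraMap R A a) = algebraMap R A (σ a))
    (hz : ∀ i, τ (z i) = z i + algebraMap R A (f i)) (p : MvPolynomial ι R) :
    aeval z (twistedShift σ f p) = τ (aeval z p) := by
  induction p using MvPolynomial.induction_on with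
  | C a => simp [hτ]
  | add p q hp hq => simp only [map_add, hp, hq]
  | mul_X p i hp => simp [hp, hz]

lemma pderiv_twistedShift (i : ι) (p : MvPolynomial ι R) :
    pderiv i (twistedShift σ f p) = twistedShift σ f (pderiv i p) := by
  classical
  induction p using MvPolynomial.induction_on with
  | C a => simp
  | add p q hp hq => simp only [map_add, hp, hq]
  | mul_X p j hp =>
    have hX : pderiv i (X j + C (f j)) = twistedShift σ f (pderiv i (X j)) := by
      simp [pderiv_X, Pi.single_apply, apply_ite (twistedShift σ f)]
    simp only [map_mul, pderiv_mul, map_add (twistedShift σ f), twistedShift_X, hp, hX]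

end CommSemiring

section LeadingCoefficient

variable [CommRing R] (σ : R →+* R) (f : ι → R)

lemma monic_prod_X_add_C_pow (m : MonomialOrder ι) (s : ι →₀ ℕ) :
    m.Monic (∏ i ∈ s.support, (X i + C (f i)) ^ s i) :=
  MonomialOrder.Monic.prod fun i _ => (m.monic_X_add_C i (f i)).pow

lemma degree_prod_X_add_C_pow [Nontrivial R] (m : MonomialOrder ι) (s : ι →₀ ℕ) :
    m.degree (∏ i ∈ s.support, (X i + C (f i)) ^ s i) = s := by
  have hmonic (i : ι) : m.Monic (X i + C (f i)) := m.monic_X_add_C i (f i)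
  have hpow (i : ι) : m.degree ((X i + C (f i)) ^ s i) = Finsupp.single i (s i) := by
    rw [m.degree_pow_of_pow_leadingCoeff_ne_zero, m.degree_X_add_C, Finsupp.smul_single_one]
    simp [(hmonic i).leadingCoeff_eq_one]
  rw [m.degree_prod_of_regular fun i _ => (hmonic i).pow.leadingCoeff_eq_one ▸ isRegular_one]
  simp only [hpow]
  exact s.sum_single

lemma coeff_twistedShift_monomial (m : MonomialOrder ι) {s t : ι →₀ ℕ} (hst : s ≼[m] t) (a : R) :
    coeff t (twistedShift σ f (monomial s a)) = σ (coeff t (monomial s a)) := by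
  classical
  nontriviality R
  have hdeg := degree_prod_X_add_C_pow f m s
  have hlead := (monic_prod_X_add_C_pow f m s).coeff_degree
  have hshift : twistedShift σ f (monomial s a) =
      C (σ a) * ∏ i ∈ s.support, (X i + C (f i)) ^ s i := by
    simp [twistedShift, eval₂_monomial, Finsupp.prod]
  rw [hshift, coeff_C_mul, coeff_monomial]
  rcases hst.eq_or_lt with heq | hlt
  · obtain rfl : s = t := m.toSyn.injective heq
    rw [hdeg] at hlead
    rw [hlead, mul_one, if_pos rfl]
  · have hne : s ≠ t := fun h => hlt.ne (congrArg m.toSyn h)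
    rw [m.coeff_eq_zero_of_lt (hdeg.symm ▸ hlt), mul_zero, if_neg hne, map_zero]

lemma coeff_twistedShift_of_degree_le (m : MonomialOrder ι) {p : MvPolynomial ι R} {t : ι →₀ ℕ}
    (ht : m.degree p ≼[m] t) : coeff t (twistedShift σ f p) = σ (coeff t p) := by
  conv_lhs => rw [p.as_sum]
  conv_rhs => rw [p.as_sum]
  simp only [map_sum, coeff_sum]
  exact Finset.sum_congr rfl fun s hs =>
    coeff_twistedShift_monomial σ f m ((m.le_degree hs).trans ht) _

end LeadingCoefficient

section FixedPolynomials

lemma exists_mem_ne_zero_twistedShift_eq_self [Field R] (σ : R →+* R) (f : ι → R)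
    {W : Submodule R (MvPolynomial ι R)} (hW : W ≠ ⊥) (hTW : ∀ p ∈ W, twistedShift σ f p ∈ W) :
    ∃ p ∈ W, p ≠ 0 ∧ twistedShift σ f p = p := by
  obtain ⟨_, _⟩ := exists_wellFoundedGT ι
  let m : MonomialOrder ι := MonomialOrder.lex
  obtain ⟨q, ⟨hqW, hq0⟩, hmin⟩ := exists_minimalFor_of_wellFoundedLT
    (fun p => p ∈ W ∧ p ≠ 0) (fun p => m.toSyn (m.degree p)) (W.exists_mem_ne_zero_of_ne_bot hW)
  have hlc : m.leadingCoeff q ≠ 0 := m.leadingCoeff_ne_zero_iff.2 hq0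
  set p := (m.leadingCoeff q)⁻¹ • q with hp
  have hpW : p ∈ W := W.smul_mem _ hqW
  have hdeg : m.degree p = m.degree q :=
    m.degree_smul_of_isRegular (IsUnit.isRegular (inv_ne_zero hlc).isUnit)
  have hmonic : coeff (m.degree q) p = 1 := by
    rw [hp, coeff_smul]
    exact inv_mul_cancel₀ hlc
  have hfix (t : ι →₀ ℕ) (ht : m.degree q ≼[m] t) : coeff t (twistedShift σ f p - p) = 0 := by
    rw [coeff_sub, coeff_twistedShift_of_degree_le σ f m (hdeg ▸ ht), sub_eq_zero]
    rcases ht.eq_or_lt with heq | hlt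
    · rw [← m.toSyn.injective heq, hmonic, map_one]
    · rw [m.coeff_eq_zero_of_lt (hdeg ▸ hlt), map_zero]
  refine ⟨p, hpW, smul_ne_zero (inv_ne_zero hlc) hq0, ?_⟩
  by_contra hne
  have hr0 : twistedShift σ f p - p ≠ 0 := sub_ne_zero.2 hne
  have hle : m.degree q ≼[m] m.degree (twistedShift σ f p - p) :=
    (le_total _ _).elim id (hmin ⟨W.sub_mem (hTW p hpW) hpW, hr0⟩)
  exact m.coeff_degree_ne_zero_iff.2 hr0 (hfix _ hle)

variable [CommRing R] [IsAddTorsionFree R] [Fintype ι] {σ : R →+* R} {f : ι → R}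

lemma sum_mul_eq_sub_of_forall_pderiv_eq_C {p : MvPolynomial ι R}
    (hp : twistedShift σ f p = p) {lam : ι → R} (hlam : ∀ i, pderiv i p = C (lam i)) :
    (∀ i, σ (lam i) = lam i) ∧ ∃ g, ∑ i, lam i * f i = σ g - g := by
  have hσ (i : ι) : σ (lam i) = lam i := by
    apply C_injective ι R
    rw [← twistedShift_C σ f, ← hlam, ← pderiv_twistedShift, hp]
  obtain ⟨c, hc⟩ : ∃ c, p = ∑ i, C (lam i) * X i + C c := by
    refine ⟨_, sub_eq_iff_eq_add'.1 (eq_C_of_forall_pderiv_eq_zero fun i => ?_)⟩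
    rw [map_sub, hlam, pderiv_sum_C_mul_X, sub_self]
  refine ⟨hσ, -c, C_injective ι R ?_⟩
  rw [hc] at hp
  simp only [map_add, map_sum, map_mul, twistedShift_C, twistedShift_X, hσ, mul_add,
    Finset.sum_add_distrib] at hp
  simp only [map_sum, map_mul, map_sub, map_neg]
  linear_combination hp

lemma exists_sum_mul_eq_sub_of_twistedShift_eq_self {p : MvPolynomial ι R}
    (hp : twistedShift σ f p = p) (hdeg : p.totalDegree ≠ 0) :
    ∃ lam : ι → R, (∀ i, σ (lam i) = lam i) ∧ (∃ i, lam i ≠ 0) ∧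
      ∃ g, ∑ i, lam i * f i = σ g - g := by
  induction hn : p.totalDegree using Nat.strong_induction_on generalizing p with
  | _ n ih =>
  by_cases hconst : ∀ i, (pderiv i p).totalDegree = 0
  · have hlam (i : ι) : pderiv i p = C (coeff 0 (pderiv i p)) :=
      totalDegree_eq_zero_iff_eq_C.1 (hconst i)
    obtain ⟨hσ, hg⟩ := sum_mul_eq_sub_of_forall_pderiv_eq_C hp hlam
    refine ⟨_, hσ, ?_, hg⟩
    by_contra! hzero
    have hpC := eq_C_of_forall_pderiv_eq_zero fun i => by rw [hlam i, hzero i, C_0]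
    exact hdeg (by rw [hpC, totalDegree_C])
  · obtain ⟨i, hi⟩ := not_forall.1 hconst
    exact ih _ (hn ▸ totalDegree_pderiv_lt hdeg i) (by rw [← pderiv_twistedShift, hp]) hi rfl

end FixedPolynomials

end TwistedShift

lemma exists_sum_mul_eq_sub_of_not_algebraicIndependent {ι R A : Type*} [Fintype ι] [Field R]
    [CharZero R] [CommRing A] [Nontrivial A] [Algebra R A] {σ : R →+* R} {τ : A →+* A}
    (hτ : ∀ a, τ (algebraMap R A a) = algebraMap R A (σ a)) {f : ι → R} {z : ι → A}
    (hz : ∀ i, τ (z i) = z i + algebraMap R A (f i)) (hdep : ¬ AlgebraicIndependent R z) :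
    ∃ lam : ι → R, (∀ i, σ (lam i) = lam i) ∧ (∃ i, lam i ≠ 0) ∧
      ∃ g, ∑ i, lam i * f i = σ g - g := by
  let W : Submodule R (MvPolynomial ι R) := LinearMap.ker (aeval z).toLinearMap
  have hW : W ≠ ⊥ := fun h => hdep (LinearMap.ker_eq_bot.1 h)
  have hTW (p) (hp : p ∈ W) : twistedShift σ f p ∈ W := by
    have hp : aeval z p = 0 := hp
    change aeval z (twistedShift σ f p) = 0
    rw [aeval_twistedShift σ f hτ hz, hp, map_zero]
  obtain ⟨p, hpW, hp0, hfix⟩ := exists_mem_ne_zero_twistedShift_eq_self σ f hW hTW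
  refine exists_sum_mul_eq_sub_of_twistedShift_eq_self hfix fun hdeg => hp0 ?_
  have hconst := totalDegree_eq_zero_iff_eq_C.1 hdeg
  have haeval : aeval z p = 0 := hpW
  rw [hconst, aeval_C, map_eq_zero] at haeval
  rw [hconst, haeval, C_0]

theorem algebraic_dependence_inhomogeneous_general
    {ι A : Type*} [Fintype ι] [CommRing A] [CharZero A] {τ : A →+* A}
    {k : Subring A} (hk : ∀ a : A, a ∈ k ↔ τ a = a)
    {K : Subring A} (hK : IsField K) (hkK : k ≤ K) (hτK : ∀ a ∈ K, τ a ∈ K)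
    {f z : ι → A} (hfK : ∀ i, f i ∈ K) (hz : ∀ i, τ (z i) = z i + f i) :
    List.TFAE
      [ ∃ lam : ι → A, (∀ i, lam i ∈ k) ∧ (∃ i, lam i ≠ 0) ∧
          ∃ g ∈ K, ∑ i, lam i * f i = τ g - g,
        ∃ lam : ι → A, (∀ i, lam i ∈ k) ∧ (∃ i, lam i ≠ 0) ∧ ∑ i, lam i * z i ∈ K,
        ∃ lam : ι → A, (∀ i, lam i ∈ K) ∧ (∃ i, lam i ≠ 0) ∧ ∑ i, lam i * z i ∈ K,
        ¬ AlgebraicIndependent K z ] := by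
  tfae_have 1 → 2 := by
    rintro ⟨lam, hlam, hne, g, hg, hsum⟩
    refine ⟨lam, hlam, hne, ?_⟩
    have hfixed : ∑ i, lam i * z i - g ∈ k := by
      rw [hk, map_sub, map_sum]
      simp only [map_mul, (hk _).1 (hlam _), hz, mul_add, Finset.sum_add_distrib, hsum]
      ring
    simpa using K.add_mem (hkK hfixed) hg
  tfae_have 2 → 3
  | ⟨lam, hlam, hne, hsum⟩ => ⟨lam, fun i => hkK (hlam i), hne, hsum⟩
  tfae_have 3 → 4 := by
    rintro ⟨lam, hlam, ⟨j, hj⟩, hsum⟩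
    lift lam to ι → K using hlam
    exact not_algebraicIndependent_of_sum_smul_eq_algebraMap (b := ⟨_, hsum⟩)
      (fun h => hj (congrArg Subtype.val h)) rfl
  tfae_have 4 → 1 := by
    intro hdep
    let := hK.toField
    obtain ⟨lam, hσ, ⟨j, hj⟩, g, hg⟩ := exists_sum_mul_eq_sub_of_not_algebraicIndependent
      (σ := τ.restrict K K hτK) (fun _ => rfl) (f := fun i => ⟨f i, hfK i⟩) hz hdep
    refine ⟨fun i => lam i, fun i => (hk _).2 (congrArg Subtype.val (hσ i)),
      ⟨j, fun h => hj (Subtype.ext h)⟩, g, g.2, ?_⟩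
    simpa using congrArg K.subtype hg
  tfae_finish

/-- Characterization of the algebraic dependence over `K` of solutions `z_i ∈ F` of the
inhomogeneous difference equations `τ(z_i) = z_i + f_i` with `f_i ∈ K*`. -/
theorem algebraic_dependence_inhomogeneous
    (F : Type*) [Field F] [CharZero F] (τ : F →+* F)
    (k : Subfield F) (hk : ∀ a : F, a ∈ k ↔ τ a = a)
    (K : Subfield F) (hkK : (k : Set F) ⊆ (K : Set F)) (hτK : ∀ a ∈ K, τ a ∈ K)
    (d : ℕ) (f z : Fin d → F)
    (hfK : ∀ i, f i ∈ K) (hf0 : ∀ i, f i ≠ 0)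
    (hz : ∀ i, τ (z i) = z i + f i) :
    List.TFAE
      [ ∃ lam : Fin d → F, (∀ i, lam i ∈ k) ∧ (∃ i, lam i ≠ 0) ∧
          ∃ g ∈ K, ∑ i, lam i * f i = τ g - g,
        ∃ lam : Fin d → F, (∀ i, lam i ∈ k) ∧ (∃ i, lam i ≠ 0) ∧
          (∑ i, lam i * z i) ∈ K,
        ∃ lam : Fin d → F, (∀ i, lam i ∈ K) ∧ (∃ i, lam i ≠ 0) ∧
          (∑ i, lam i * z i) ∈ K,
        ¬ AlgebraicIndependent K z ] :=
  algebraic_dependence_inhomogeneous_general (k := k.toSubring) (K := K.toSubring) hk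
    (Field.toIsField K) hkK hτK hfK hz
end

section
/- Let F be a field of characteristic zero, τ : F → F a ring homomorphism, k := F^τ its fixed field, and K a subfield of F with τ(K) ⊆ K and k ⊆ K. Let a₁, …, a_d ∈ K be nonzero and let z₁, …, z_d ∈ F be nonzero elements satisfying τ(z_i) = a_i z_i for i = 1, …, d. Then the following are equivalent: (1) there exist λ₁, …, λ_d ∈ ℤ, not all zero, and g ∈ K, g ≠ 0, such that a₁^{λ₁} ⋯ a_d^{λ_d} = τ(g)/g; (2) there exist λ₁, …, λ_d ∈ ℤ, not all zero, such that z₁^{λ₁} ⋯ z_d^{λ_d} ∈ K; (3) z₁, …, z_d are algebraically dependent over K. -/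
set_option synthInstance.maxHeartbeats 400000
set_option maxHeartbeats 1000000

/-!
Call two elements of `F` proportional if their quotient lies in `K`. If `τ vᵢ = bᵢ vᵢ` with
`bᵢ ∈ K`, then nonzero, pairwise non-proportional `vᵢ` are linearly independent over `K`: in a
relation `vⱼ = ∑ cᵢ vᵢ` with linearly independent `vᵢ` on the right, compare the image under `τ`
with the multiple by `bⱼ`. Equality of coefficients says that `cᵢ vᵢ / vⱼ` is fixed by `τ`, hence
lies in `K`, so every `cᵢ` is zero.

Algebraic independence of `z` is linear independence of the monomials in `z`, which solve equations
of the same shape. It therefore fails exactly when two distinct monomials are proportional, that is,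
when a nontrivial Laurent monomial `w` in `z` lies in `K`. If `τ w = b w` and `b = τ g / g` with
`g ∈ K`, then `w / g` is fixed by `τ`, so such a `g` exists if and only if `w ∈ K`.
-/

theorem algebraicIndependent_iff_linearIndependent_monomials {ι R A : Type*} [CommRing R]
    [CommRing A] [Algebra R A] (z : ι → A) :
    AlgebraicIndependent R z ↔
      LinearIndependent R fun m : ι →₀ ℕ ↦ m.prod fun i e ↦ z i ^ e := by
  have aeval_eq_linearCombination (p : MvPolynomial ι R) :
      MvPolynomial.aeval z p =
        Finsupp.linearCombination R (fun m : ι →₀ ℕ ↦ m.prod fun i e ↦ z i ^ e)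
          ((MvPolynomial.basisMonomials ι R).repr p) := by
    conv_lhs => rw [← (MvPolynomial.basisMonomials ι R).linearCombination_repr p]
    simp [Finsupp.linearCombination_apply, Finsupp.sum, MvPolynomial.aeval_monomial,
      Algebra.smul_def]
  rw [AlgebraicIndependent, LinearIndependent, funext aeval_eq_linearCombination]
  exact (MvPolynomial.basisMonomials ι R).repr.toEquiv.injective_comp _

section LaurentMonomial

theorem map_prod_pow_of_map_eq_mul {ι M T : Type*} [CommMonoid M] [FunLike T M M]
    [MonoidHomClass T M M] {τ : T} {a z : ι → M} (hz : ∀ i, τ (z i) = a i * z i) (m : ι →₀ ℕ) :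
    τ (m.prod fun i e ↦ z i ^ e) = (m.prod fun i e ↦ a i ^ e) * m.prod fun i e ↦ z i ^ e := by
  simp only [map_finsuppProd, map_pow, hz, mul_pow, Finsupp.prod_mul]

variable {ι G₀ : Type*} [CommGroupWithZero G₀] {z : ι → G₀}

theorem map_prod_zpow_of_map_eq_mul {T : Type*} [FunLike T G₀ G₀] [MonoidWithZeroHomClass T G₀ G₀]
    {τ : T} {a : ι → G₀} (hz : ∀ i, τ (z i) = a i * z i) (l : ι →₀ ℤ) :
    τ (l.prod fun i e ↦ z i ^ e) = (l.prod fun i e ↦ a i ^ e) * l.prod fun i e ↦ z i ^ e := by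
  simp only [map_finsuppProd, map_zpow₀, hz, mul_zpow, Finsupp.prod_mul]

theorem prod_zpow_eq_prod_pow_div_prod_pow (hz0 : ∀ i, z i ≠ 0) {l : ι →₀ ℤ} {m n : ι →₀ ℕ}
    (hl : ∀ i, l i = m i - n i) :
    (l.prod fun i e ↦ z i ^ e) = (m.prod fun i e ↦ z i ^ e) / n.prod fun i e ↦ z i ^ e := by
  have prod_eq (m : ι →₀ ℕ) : (m.prod fun i e ↦ z i ^ e) =
      (m.mapRange ((↑) : ℕ → ℤ) rfl).prod fun i e ↦ z i ^ e := by
    simp [Finsupp.prod_mapRange_index]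
  have add_eq : l + n.mapRange ((↑) : ℕ → ℤ) rfl = m.mapRange ((↑) : ℕ → ℤ) rfl := by
    ext i
    simp [hl]
  have hn0 : (n.prod fun i e ↦ z i ^ e) ≠ 0 :=
    Finset.prod_ne_zero_iff.2 fun i _ ↦ pow_ne_zero _ (hz0 i)
  rw [eq_div_iff hn0, prod_eq m, prod_eq n, ← add_eq]
  exact (Finsupp.prod_add_index' (fun i ↦ zpow_zero _) fun i ↦ zpow_add₀ (hz0 i)).symm

theorem exists_prod_zpow_mem_iff_exists_prod_pow_div_mem (hz0 : ∀ i, z i ≠ 0) (S : Set G₀) :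
    (∃ l : ι →₀ ℤ, l ≠ 0 ∧ (l.prod fun i e ↦ z i ^ e) ∈ S) ↔
      ∃ m n : ι →₀ ℕ, m ≠ n ∧
        (m.prod fun i e ↦ z i ^ e) / (n.prod fun i e ↦ z i ^ e) ∈ S := by
  constructor
  · rintro ⟨l, hl, hS⟩
    have sub_eq (i : ι) : l i = (l.mapRange Int.toNat rfl i : ℤ) -
        ((-l).mapRange Int.toNat rfl i : ℤ) := by
      simp only [Finsupp.mapRange_apply, Finsupp.neg_apply]
      omega
    refine ⟨l.mapRange Int.toNat rfl, (-l).mapRange Int.toNat rfl, fun heq ↦ hl ?_, ?_⟩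
    · ext i
      rw [sub_eq i, heq, sub_self, Finsupp.zero_apply]
    · rwa [← prod_zpow_eq_prod_pow_div_prod_pow hz0 sub_eq]
  · rintro ⟨m, n, hmn, hS⟩
    refine ⟨m.mapRange (↑) rfl - n.mapRange (↑) rfl, fun heq ↦ hmn ?_, ?_⟩
    · ext i
      simpa [sub_eq_zero] using DFunLike.congr_fun heq i
    · rwa [prod_zpow_eq_prod_pow_div_prod_pow hz0 (m := m) (n := n) (by simp)]

end LaurentMonomial

section DifferenceField

variable {ι F : Type*} [Field F] {τ : F →+* F} {K : Subfield F}

theorem mem_iff_exists_eq_map_div_self (hfix : ∀ x, τ x = x → x ∈ K) {b w : F} (hw0 : w ≠ 0)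
    (hw : τ w = b * w) : w ∈ K ↔ ∃ g ∈ K, g ≠ 0 ∧ b = τ g / g := by
  constructor
  · intro hwK
    exact ⟨w, hwK, hw0, by rw [hw, mul_div_cancel_right₀ _ hw0]⟩
  · rintro ⟨g, hgK, hg0, rfl⟩
    have hτg0 : τ g ≠ 0 := (map_ne_zero τ).2 hg0
    have hwgK : w / g ∈ K := hfix _ <| by
      rw [map_div₀, hw]
      field_simp
    simpa [hg0] using K.mul_mem hwgK hgK

theorem div_notMem_of_linearIndependent {v : ι → F} (hv : LinearIndependent K v) :
    Pairwise fun i j ↦ v i / v j ∉ K := by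
  intro i j hij hK
  have hvi : v i = (⟨v i / v j, hK⟩ : K) • v j := (div_mul_cancel₀ _ (hv.ne_zero j)).symm
  refine hv.notMem_span_image (s := {j}) (x := i) hij ?_
  rw [Set.image_singleton, hvi]
  exact Submodule.smul_mem _ _ (Submodule.mem_span_singleton_self _)

theorem map_coeff_mul_eq_mul_coeff [Fintype ι] (hτK : ∀ x ∈ K, τ x ∈ K) {b v : ι → F}
    (hbK : ∀ i, b i ∈ K) (hv : ∀ i, τ (v i) = b i * v i) (hind : LinearIndependent K v) {β w : F}
    (hβK : β ∈ K) (hw : τ w = β * w) {c : ι → K} (hc : ∑ i, c i • v i = w) (i : ι) :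
    τ (c i) * b i = β * c i := by
  have sum_eq : ∑ i, (⟨τ (c i) * b i, K.mul_mem (hτK _ (c i).2) (hbK i)⟩ : K) • v i =
      ∑ i, (⟨β, hβK⟩ * c i) • v i := by
    calc ∑ i, (τ (c i) * b i) * v i
      _ = τ (∑ i, c i • v i) := by
        simp only [map_sum, Subfield.smul_def, smul_eq_mul, map_mul, hv, mul_assoc]
      _ = β * ∑ i, c i • v i := by rw [hc, hw]
      _ = ∑ i, (⟨β, hβK⟩ * c i) • v i := by
        simp only [Finset.mul_sum, Subfield.smul_def, smul_eq_mul, K.coe_mul, mul_assoc]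
  exact congrArg Subtype.val (hind.eq_coords_of_eq sum_eq i)

theorem notMem_span_range_of_div_notMem [Finite ι] (hfix : ∀ x, τ x = x → x ∈ K)
    (hτK : ∀ x ∈ K, τ x ∈ K) {b v : ι → F} (hbK : ∀ i, b i ∈ K) (hv : ∀ i, τ (v i) = b i * v i)
    (hind : LinearIndependent K v) {β w : F} (hβK : β ∈ K) (hw0 : w ≠ 0) (hw : τ w = β * w)
    (hne : ∀ i, v i / w ∉ K) : w ∉ Submodule.span K (Set.range v) := by
  have := Fintype.ofFinite ι
  intro hspan
  obtain ⟨c, hc⟩ := (Submodule.mem_span_range_iff_exists_fun K).1 hspan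
  have coeff_eq_zero (i : ι) : c i = 0 := by
    by_contra hci
    have hβw0 : β * w ≠ 0 := hw ▸ (map_ne_zero τ).2 hw0
    have hfixed : c i * (v i / w) ∈ K := hfix _ <| by
      rw [map_mul, map_div₀, hv, hw, ← mul_div_assoc, ← mul_div_assoc, div_eq_div_iff hβw0 hw0]
      linear_combination v i * w * map_coeff_mul_eq_mul_coeff hτK hbK hv hind hβK hw hc i
    have hratio : v i / w ∈ K := by
      simpa [hci] using K.mul_mem (K.inv_mem (c i).2) hfixed
    exact hne i hratio
  exact hw0 (by simp [← hc, coeff_eq_zero])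

theorem linearIndependent_of_div_notMem (hfix : ∀ x, τ x = x → x ∈ K) (hτK : ∀ x ∈ K, τ x ∈ K)
    {b v : ι → F} (hbK : ∀ i, b i ∈ K) (hv0 : ∀ i, v i ≠ 0) (hv : ∀ i, τ (v i) = b i * v i)
    (hne : Pairwise fun i j ↦ v i / v j ∉ K) : LinearIndependent K v := by
  classical
  refine linearIndependent_iff_finset_linearIndependent.2 fun s ↦ ?_
  change LinearIndepOn K v s
  induction s using Finset.induction_on with
  | empty => simp
  | insert j s hj ih =>
    rw [Finset.coe_insert, linearIndepOn_insert (by simpa using hj), Set.image_eq_range]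
    exact ⟨ih, notMem_span_range_of_div_notMem (v := fun i : s ↦ v i) hfix hτK (fun i ↦ hbK i)
      (fun i ↦ hv i) ih (hbK j) (hv0 j) (hv j) fun i ↦ hne fun hij ↦ hj (hij ▸ i.2)⟩

end DifferenceField

theorem not_algebraicIndependent_iff_exists_prod_zpow_mem {ι F : Type*} [Field F] {τ : F →+* F}
    {K : Subfield F} (hfix : ∀ x, τ x = x → x ∈ K) (hτK : ∀ x ∈ K, τ x ∈ K) {a z : ι → F}
    (haK : ∀ i, a i ∈ K) (hz0 : ∀ i, z i ≠ 0) (hz : ∀ i, τ (z i) = a i * z i) :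
    ¬ AlgebraicIndependent K z ↔ ∃ l : ι →₀ ℤ, l ≠ 0 ∧ (l.prod fun i e ↦ z i ^ e) ∈ K := by
  have linearIndependent_iff :
      LinearIndependent K (fun m : ι →₀ ℕ ↦ m.prod fun i e ↦ z i ^ e) ↔
        Pairwise fun m n : ι →₀ ℕ ↦
          (m.prod fun i e ↦ z i ^ e) / (n.prod fun i e ↦ z i ^ e) ∉ K :=
    ⟨div_notMem_of_linearIndependent,
      linearIndependent_of_div_notMem hfix hτK
        (fun m ↦ K.prod_mem fun i _ ↦ K.pow_mem (haK i) _)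
        (fun m ↦ Finset.prod_ne_zero_iff.2 fun i _ ↦ pow_ne_zero _ (hz0 i))
        (map_prod_pow_of_map_eq_mul hz)⟩
  rw [algebraicIndependent_iff_linearIndependent_monomials, linearIndependent_iff]
  refine Iff.trans ?_ (exists_prod_zpow_mem_iff_exists_prod_pow_div_mem hz0 K).symm
  simp only [Pairwise, not_forall, not_not, exists_prop, SetLike.mem_coe]

theorem algebraic_dependence_homogeneous_general {ι F : Type*} [Field F] {τ : F →+* F}
    {K : Subfield F} (hfix : ∀ x, τ x = x → x ∈ K) (hτK : ∀ x ∈ K, τ x ∈ K) {a z : ι → F}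
    (haK : ∀ i, a i ∈ K) (hz0 : ∀ i, z i ≠ 0) (hz : ∀ i, τ (z i) = a i * z i) :
    List.TFAE
      [ ∃ l : ι →₀ ℤ, l ≠ 0 ∧ ∃ g ∈ K, g ≠ 0 ∧ (l.prod fun i e ↦ a i ^ e) = τ g / g,
        ∃ l : ι →₀ ℤ, l ≠ 0 ∧ (l.prod fun i e ↦ z i ^ e) ∈ K,
        ¬ AlgebraicIndependent K z ] := by
  have hw0 (l : ι →₀ ℤ) : (l.prod fun i e ↦ z i ^ e) ≠ 0 :=
    Finset.prod_ne_zero_iff.2 fun i _ ↦ zpow_ne_zero _ (hz0 i)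
  tfae_have 1 ↔ 2 := exists_congr fun l ↦ and_congr_right fun _ ↦
    (mem_iff_exists_eq_map_div_self hfix (hw0 l) (map_prod_zpow_of_map_eq_mul hz l)).symm
  tfae_have 3 ↔ 2 := not_algebraicIndependent_iff_exists_prod_zpow_mem hfix hτK haK hz0 hz
  tfae_finish

/-- Characterization of the algebraic dependence over `K` of nonzero solutions `z_i ∈ F` of
the homogeneous difference equations `τ(z_i) = a_i z_i` with `a_i ∈ K*`. -/
theorem algebraic_dependence_homogeneous
    (F : Type*) [Field F] [CharZero F] (τ : F →+* F)
    (k : Subfield F) (hk : ∀ a : F, a ∈ k ↔ τ a = a)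
    (K : Subfield F) (hkK : (k : Set F) ⊆ (K : Set F)) (hτK : ∀ a ∈ K, τ a ∈ K)
    (d : ℕ) (a z : Fin d → F)
    (haK : ∀ i, a i ∈ K) (ha0 : ∀ i, a i ≠ 0) (hz0 : ∀ i, z i ≠ 0)
    (hz : ∀ i, τ (z i) = a i * z i) :
    List.TFAE
      [ ∃ lam : Fin d → ℤ, (∃ i, lam i ≠ 0) ∧
          ∃ g ∈ K, g ≠ 0 ∧ (∏ i, a i ^ lam i) = τ g / g,
        ∃ lam : Fin d → ℤ, (∃ i, lam i ≠ 0) ∧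
          (∏ i, z i ^ lam i) ∈ K,
        ¬ AlgebraicIndependent K z ] := by
  simpa [Finsupp.equivFunOnFinite.exists_congr_left, Finsupp.prod_fintype, DFunLike.ne_iff] using
    algebraic_dependence_homogeneous_general (fun x hx ↦ hkK ((hk x).2 hx)) hτK haK hz0 hz
end

section
/- Let k be a field of characteristic zero and C ⊆ k an algebraically closed subfield. Consider the field k(X) of rational functions over k, with the standard derivation d/dX, and let τ : k(X) → k(X) be the k-algebra automorphism determined by X ↦ X + 1. Let f ∈ C(X) be a rational function with coefficients in C, viewed inside k(X). If there exist n ≥ 0, λ₀, …, λₙ ∈ k, not all zero, and g ∈ k(X) such that λ₀f + λ₁(d/dX)(f) + ⋯ + λₙ(d/dX)ⁿ(f) = τ(g) − g, then there exist μ₀, …, μₙ ∈ C, not all zero, and h ∈ C(X) such that μ₀f + μ₁(d/dX)(f) + ⋯ + μₙ(d/dX)ⁿ(f) = h(X+1) − h(X). -/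
set_option synthInstance.maxHeartbeats 400000
set_option maxHeartbeats 1000000

/-!
By partial fractions, `g = P / b + p / q` where `b` has coefficients in `C`, no root of `q` is
algebraic over `C`, and `p / q` is proper. Substituting a polynomial over `C` for `X` preserves both
kinds of denominator, so `τ (p / q) - p / q` has a denominator without roots algebraic over `C`; as
it also has a denominator over `C`, it is a polynomial, and being proper it vanishes. Hence `g` may
be replaced by `P / b`. With the denominators cleared, the equation is then linear over `C` in the
pair `(λ, P)`, and applying coefficientwise a `C`-linear functional `k → C` that does not vanish on
some `λ i` gives the required solution over `C`.
-/

open Polynomial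

section Coeffwise
variable {R A : Type*} [CommSemiring R] [Semiring A] [Algebra R A]

/-- The `R`-linear map `A[X] → R[X]` that applies `ℓ : A → R` to every coefficient. -/
noncomputable def coeffwise (ℓ : A →ₗ[R] R) : A[X] →ₗ[R] R[X] :=
  lsum fun i => monomial i ∘ₗ ℓ

lemma coeffwise_monomial (ℓ : A →ₗ[R] R) (i : ℕ) (a : A) :
    coeffwise ℓ (monomial i a) = monomial i (ℓ a) := by
  simp [coeffwise, lsum_apply]

lemma coeffwise_map_mul (ℓ : A →ₗ[R] R) (p : R[X]) (q : A[X]) :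
    coeffwise ℓ (p.map (algebraMap R A) * q) = p * coeffwise ℓ q := by
  induction p using Polynomial.induction_on' with
  | add p₁ p₂ h₁ h₂ => simp only [Polynomial.map_add, add_mul, map_add, h₁, h₂]
  | monomial i r =>
    induction q using Polynomial.induction_on' with
    | add q₁ q₂ h₁ h₂ => simp only [mul_add, map_add, h₁, h₂]
    | monomial j a =>
      simp only [map_monomial, monomial_mul_monomial, coeffwise_monomial, ← Algebra.smul_def,
        map_smul, smul_eq_mul]

lemma coeffwise_C_mul_map (ℓ : A →ₗ[R] R) (a : A) (p : R[X]) :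
    coeffwise ℓ (C a * p.map (algebraMap R A)) = C (ℓ a) * p := by
  induction p using Polynomial.induction_on' with
  | add p₁ p₂ h₁ h₂ => simp only [Polynomial.map_add, mul_add, map_add, h₁, h₂]
  | monomial i r =>
    rw [map_monomial, C_mul_monomial, coeffwise_monomial, ← Algebra.commutes, ← Algebra.smul_def,
      map_smul, smul_eq_mul, mul_comm, C_mul_monomial]

lemma coeffwise_comp_map (ℓ : A →ₗ[R] R) (p : A[X]) (t : R[X]) :
    coeffwise ℓ (p.comp (t.map (algebraMap R A))) = (coeffwise ℓ p).comp t := by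
  induction p using Polynomial.induction_on' with
  | add p₁ p₂ h₁ h₂ => simp only [add_comp, map_add, h₁, h₂]
  | monomial i a =>
    rw [monomial_comp, ← Polynomial.map_pow, coeffwise_C_mul_map, coeffwise_monomial,
      monomial_comp]

end Coeffwise

section Field

variable {F k : Type*} [Field F] [Field k] [Algebra F k]

lemma exists_sum_C_mul_eq_of_map {ι : Type*} [Fintype ι] {m : ι → F[X]} {t u v w : F[X]}
    {lam : ι → k} (hlam : ∃ i, lam i ≠ 0) {P : k[X]}
    (h : (∑ i, C (lam i) * (m i).map (algebraMap F k)) * u.map (algebraMap F k) =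
      v.map (algebraMap F k) * P.comp (t.map (algebraMap F k)) - w.map (algebraMap F k) * P) :
    ∃ mu : ι → F, (∃ i, mu i ≠ 0) ∧
      ∃ p : F[X], (∑ i, C (mu i) * m i) * u = v * p.comp t - w * p := by
  obtain ⟨i, hi⟩ := hlam
  obtain ⟨ℓ, hℓ⟩ : ∃ ℓ : k →ₗ[F] F, ℓ (lam i) ≠ 0 := by
    by_contra! hzero
    exact hi ((Module.forall_dual_apply_eq_zero_iff F (lam i)).1 hzero)
  refine ⟨fun j => ℓ (lam j), ⟨i, hℓ⟩, coeffwise ℓ P, ?_⟩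
  simpa only [mul_comm _ (u.map _), map_sum, map_sub, coeffwise_C_mul_map, coeffwise_map_mul,
    coeffwise_comp_map, mul_comm u] using congrArg (coeffwise ℓ) h

lemma exists_ne_zero_dvd_comp {b : F[X]} (hb : b ≠ 0) (t : F[X]) :
    ∃ r : F[X], r ≠ 0 ∧ b ∣ r.comp t := by
  have : Module.Finite F (AdjoinRoot b) := (AdjoinRoot.powerBasis hb).finite
  obtain ⟨r, hr, hrt⟩ := IsIntegral.of_finite F (AdjoinRoot.mk b t)
  refine ⟨r, hr.ne_zero, AdjoinRoot.mk_eq_zero.1 ?_⟩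
  rw [comp_eq_aeval, ← AdjoinRoot.coe_mkₐ, ← aeval_algHom_apply]
  exact hrt

variable (F) in
/-- No root of `q` in an algebraic closure of `k` is algebraic over `F`; this is phrased without
roots, as coprimality of `q` to every nonzero polynomial with coefficients in `F`. -/
def NoAlgebraicRoots (q : k[X]) : Prop :=
  ∀ b : F[X], b ≠ 0 → IsCoprime q (b.map (algebraMap F k))

lemma NoAlgebraicRoots.mul {p q : k[X]} (hp : NoAlgebraicRoots F p) (hq : NoAlgebraicRoots F q) :
    NoAlgebraicRoots F (p * q) :=
  fun b hb => (hp b hb).mul_left (hq b hb)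

lemma NoAlgebraicRoots.comp_map {q : k[X]} (hq : NoAlgebraicRoots F q) (t : F[X]) :
    NoAlgebraicRoots F (q.comp (t.map (algebraMap F k))) := by
  intro b hb
  obtain ⟨r, hr, hbr⟩ := exists_ne_zero_dvd_comp hb t
  have hcomp := (hq r hr).map (compRingHom (t.map (algebraMap F k)))
  simp only [coe_compRingHom, ← Polynomial.map_comp] at hcomp
  exact hcomp.of_isCoprime_of_dvd_right (Polynomial.map_dvd _ hbr)

lemma NoAlgebraicRoots.ne_zero {q : k[X]} (hq : NoAlgebraicRoots F q) : q ≠ 0 := by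
  rintro rfl
  have hX : IsUnit ((X : F[X]).map (algebraMap F k)) := isCoprime_zero_left.1 (hq X X_ne_zero)
  rw [map_X] at hX
  exact not_isUnit_X hX

lemma exists_dvd_map_mul_noAlgebraicRoots {q : k[X]} (hq : q ≠ 0) :
    ∃ b : F[X], b ≠ 0 ∧ ∃ r : k[X], NoAlgebraicRoots F r ∧ q ∣ b.map (algebraMap F k) * r := by
  induction q using UniqueFactorizationMonoid.induction_on_prime with
  | h₁ => exact absurd rfl hq
  | h₂ q hunit => exact ⟨1, one_ne_zero, 1, fun _ _ => isCoprime_one_left, hunit.dvd⟩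
  | h₃ q p hq' hp ih =>
    obtain ⟨b, hb, r, hr, hqbr⟩ := ih hq'
    by_cases hpF : ∃ c : F[X], c ≠ 0 ∧ p ∣ c.map (algebraMap F k)
    · obtain ⟨c, hc, hpc⟩ := hpF
      refine ⟨c * b, mul_ne_zero hc hb, r, hr, ?_⟩
      rw [Polynomial.map_mul, mul_assoc]
      exact mul_dvd_mul hpc hqbr
    · push Not at hpF
      have hp' : NoAlgebraicRoots F p := fun c hc =>
        (hp.irreducible.coprime_iff_not_dvd).2 (hpF c hc)
      exact ⟨b, hb, p * r, hp'.mul hr, by rw [mul_left_comm]; exact mul_dvd_mul_left p hqbr⟩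

end Field

lemma degree_comp_lt_degree_comp {R : Type*} [Semiring R] [NoZeroDivisors R] {p q t : R[X]}
    (ht : 0 < t.natDegree) (hpq : p.degree < q.degree) :
    (p.comp t).degree < (q.comp t).degree := by
  have hq : q.comp t ≠ 0 := by
    rw [Ne, comp_eq_zero_iff]
    rintro (rfl | ⟨-, htC⟩)
    · exact not_lt_bot hpq
    · rw [htC, natDegree_C] at ht
      exact ht.false
  obtain rfl | hp := eq_or_ne p 0
  · rw [zero_comp, degree_zero]
    exact bot_lt_iff_ne_bot.2 (degree_ne_bot.2 hq)
  · refine degree_lt_degree ?_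
    rw [natDegree_comp, natDegree_comp]
    exact Nat.mul_lt_mul_of_pos_right (natDegree_lt_natDegree hp hpq) ht

section RatFunc

variable {k : Type*} [Field k]

lemma ratFunc_mk_sub_mk (p p' : k[X]) {q q' : k[X]} (hq : q ≠ 0) (hq' : q' ≠ 0) :
    RatFunc.mk p q - RatFunc.mk p' q' = RatFunc.mk (p * q' - q * p') (q * q') := by
  simp only [RatFunc.mk_eq_div, map_sub, map_mul]
  exact div_sub_div _ _ (RatFunc.algebraMap_ne_zero hq) (RatFunc.algebraMap_ne_zero hq')

lemma ratFunc_mk_add_mk (p p' : k[X]) {q q' : k[X]} (hq : q ≠ 0) (hq' : q' ≠ 0) :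
    RatFunc.mk p q + RatFunc.mk p' q' = RatFunc.mk (p * q' + q * p') (q * q') := by
  simp only [RatFunc.mk_eq_div, map_add, map_mul]
  exact div_add_div _ _ (RatFunc.algebraMap_ne_zero hq) (RatFunc.algebraMap_ne_zero hq')

lemma sum_smul_ratFunc_mk {ι : Type*} (s : Finset ι) (lam : ι → k) (m : ι → k[X]) (q : k[X]) :
    ∑ i ∈ s, lam i • RatFunc.mk (m i) q = RatFunc.mk (∑ i ∈ s, C (lam i) * m i) q := by
  simp only [RatFunc.mk_eq_div, map_sum, map_mul, Finset.sum_div, RatFunc.smul_eq_C_mul,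
    RatFunc.algebraMap_C, mul_div_assoc]

variable {τ : RatFunc k →ₐ[k] RatFunc k} {t : k[X]}

lemma algHom_algebraMap (hτ : τ RatFunc.X = algebraMap k[X] (RatFunc k) t) (p : k[X]) :
    τ (algebraMap k[X] (RatFunc k) p) = algebraMap k[X] (RatFunc k) (p.comp t) := by
  rw [← RatFunc.aeval_X_left_eq_algebraMap, ← aeval_algHom_apply, hτ, aeval_algebraMap_apply,
    comp_eq_aeval]

lemma comp_ne_zero_of_algHom_X (hτ : τ RatFunc.X = algebraMap k[X] (RatFunc k) t) {q : k[X]}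
    (hq : q ≠ 0) : q.comp t ≠ 0 := by
  intro hzero
  have hτq : τ (algebraMap k[X] (RatFunc k) q) = 0 := by
    rw [algHom_algebraMap hτ, hzero, map_zero]
  exact RatFunc.algebraMap_ne_zero hq ((map_eq_zero τ).1 hτq)

lemma natDegree_pos_of_algHom_X (hτ : τ RatFunc.X = algebraMap k[X] (RatFunc k) t) :
    0 < t.natDegree := by
  by_contra! ht
  obtain ⟨c, rfl⟩ := natDegree_eq_zero.1 (Nat.le_zero.1 ht)
  exact comp_ne_zero_of_algHom_X hτ (X_sub_C_ne_zero c) (by simp)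

lemma algHom_mk (hτ : τ RatFunc.X = algebraMap k[X] (RatFunc k) t) (p q : k[X]) :
    τ (RatFunc.mk p q) = RatFunc.mk (p.comp t) (q.comp t) := by
  simp only [RatFunc.mk_eq_div, map_div₀, algHom_algebraMap hτ]

lemma algHom_mk_sub_mk (hτ : τ RatFunc.X = algebraMap k[X] (RatFunc k) t) (p : k[X]) {q : k[X]}
    (hq : q ≠ 0) :
    τ (RatFunc.mk p q) - RatFunc.mk p q =
      RatFunc.mk (p.comp t * q - q.comp t * p) (q.comp t * q) := by
  rw [algHom_mk hτ, ratFunc_mk_sub_mk _ _ (comp_ne_zero_of_algHom_X hτ hq) hq]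

lemma sum_smul_mk_eq_algHom_mk_sub_mk_iff {ι : Type*} [Fintype ι]
    (hτ : τ RatFunc.X = algebraMap k[X] (RatFunc k) t) (a : ι → k) (m : ι → k[X]) (p : k[X])
    {q r : k[X]} (hq : q ≠ 0) (hr : r ≠ 0) :
    ∑ i, a i • RatFunc.mk (m i) r = τ (RatFunc.mk p q) - RatFunc.mk p q ↔
      (∑ i, C (a i) * m i) * (q.comp t * q) = r * q * p.comp t - r * q.comp t * p := by
  have hden : q.comp t * q ≠ 0 := mul_ne_zero (comp_ne_zero_of_algHom_X hτ hq) hq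
  have hnum : (p.comp t * q - q.comp t * p) * r = r * q * p.comp t - r * q.comp t * p := by ring
  rw [sum_smul_ratFunc_mk, algHom_mk_sub_mk hτ p hq, RatFunc.mk_eq_mk hr hden, hnum]

end RatFunc

section PartialFractions

variable {F k : Type*} [Field F] [Field k] [Algebra F k]

lemma exists_eq_mk_map_add_mk (g : RatFunc k) :
    ∃ b : F[X], b ≠ 0 ∧ ∃ P p q : k[X], NoAlgebraicRoots F q ∧ p.degree < q.degree ∧
      g = RatFunc.mk P (b.map (algebraMap F k)) + RatFunc.mk p q := by
  obtain ⟨b, hb, q, hq, c, hc⟩ := exists_dvd_map_mul_noAlgebraicRoots (F := F) g.denom_ne_zero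
  obtain ⟨x, y, hxy⟩ := hq b hb
  have hbk : b.map (algebraMap F k) ≠ 0 := Polynomial.map_ne_zero hb
  refine ⟨b, hb, g.num * c * x + b.map (algebraMap F k) * (g.num * c * y / q),
    g.num * c * y % q, q, hq, degree_mod_lt _ hq.ne_zero, ?_⟩
  have hc0 : c ≠ 0 := right_ne_zero_of_mul (hc ▸ mul_ne_zero hbk hq.ne_zero)
  rw [ratFunc_mk_add_mk _ _ hbk hq.ne_zero, hc]
  conv_lhs => rw [← RatFunc.num_div_denom g, ← RatFunc.mk_eq_div]
  rw [RatFunc.mk_eq_mk g.denom_ne_zero (mul_ne_zero g.denom_ne_zero hc0)]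
  linear_combination (-g.num * c * g.denom) * hxy +
    (-b.map (algebraMap F k) * g.denom) * EuclideanDomain.div_add_mod (g.num * c * y) q

variable {τ : RatFunc k →ₐ[k] RatFunc k} {t : F[X]}

lemma algHom_mk_eq_self_of_noAlgebraicRoots
    (hτ : τ RatFunc.X = algebraMap k[X] (RatFunc k) (t.map (algebraMap F k)))
    {p q : k[X]} (hq : NoAlgebraicRoots F q) (hpq : p.degree < q.degree)
    {s : F[X]} (hs : s ≠ 0) {N : k[X]}
    (h : τ (RatFunc.mk p q) - RatFunc.mk p q = RatFunc.mk N (s.map (algebraMap F k))) :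
    τ (RatFunc.mk p q) = RatFunc.mk p q := by
  set T := t.map (algebraMap F k)
  have hqT : q.comp T ≠ 0 := comp_ne_zero_of_algHom_X hτ hq.ne_zero
  have hdvd : q.comp T * q ∣ p.comp T * q - q.comp T * p := by
    rw [algHom_mk_sub_mk hτ p hq.ne_zero,
      RatFunc.mk_eq_mk (mul_ne_zero hqT hq.ne_zero) (Polynomial.map_ne_zero hs)] at h
    exact ((hq.comp_map t).mul hq s hs).dvd_of_dvd_mul_right (Dvd.intro_left N h.symm)
  have hdeg : (p.comp T * q - q.comp T * p).degree < (q.comp T * q).degree := by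
    refine (degree_sub_le _ _).trans_lt (max_lt ?_ ?_) <;> rw [degree_mul, degree_mul]
    · exact WithBot.add_lt_add_right (degree_ne_bot.2 hq.ne_zero)
        (degree_comp_lt_degree_comp (natDegree_pos_of_algHom_X hτ) hpq)
    · exact WithBot.add_lt_add_left (degree_ne_bot.2 hqT) hpq
  rw [← sub_eq_zero, algHom_mk_sub_mk hτ p hq.ne_zero, eq_zero_of_dvd_of_degree_lt hdvd hdeg,
    RatFunc.mk_eq_div, map_zero, zero_div]

lemma exists_algHom_sub_eq_algHom_mk_map_sub
    (hτ : τ RatFunc.X = algebraMap k[X] (RatFunc k) (t.map (algebraMap F k)))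
    {g : RatFunc k} {s : F[X]} (hs : s ≠ 0) {N : k[X]}
    (h : τ g - g = RatFunc.mk N (s.map (algebraMap F k))) :
    ∃ b : F[X], b ≠ 0 ∧ ∃ P : k[X], τ g - g =
      τ (RatFunc.mk P (b.map (algebraMap F k))) - RatFunc.mk P (b.map (algebraMap F k)) := by
  obtain ⟨b, hb, P, p, q, hq, hpq, rfl⟩ := exists_eq_mk_map_add_mk (F := F) g
  have hbk : b.map (algebraMap F k) ≠ 0 := Polynomial.map_ne_zero hb
  have hden : b.comp t * b ≠ 0 := by
    refine mul_ne_zero (fun hbt => comp_ne_zero_of_algHom_X hτ hbk ?_) hb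
    rw [← Polynomial.map_comp, hbt, Polynomial.map_zero]
  have hdiff : τ (RatFunc.mk p q) - RatFunc.mk p q = RatFunc.mk N (s.map (algebraMap F k)) -
      (τ (RatFunc.mk P (b.map (algebraMap F k))) - RatFunc.mk P (b.map (algebraMap F k))) := by
    rw [← h, map_add]
    ring
  rw [algHom_mk_sub_mk hτ P hbk, ← Polynomial.map_comp, ← Polynomial.map_mul,
    ratFunc_mk_sub_mk _ _ (Polynomial.map_ne_zero hs) (Polynomial.map_ne_zero hden),
    ← Polynomial.map_mul] at hdiff
  have hfix := algHom_mk_eq_self_of_noAlgebraicRoots hτ hq hpq (mul_ne_zero hs hden) hdiff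
  exact ⟨b, hb, P, by rw [map_add, hfix, add_sub_add_right_eq_sub]⟩

end PartialFractions

section RatFuncOver

variable {k : Type*} [Field k] {C : Subfield k}

variable (C) in
/-- The field `C(X)` of rational functions with coefficients in `C`, as the subfield of `k(X)`
generated by the polynomials with coefficients in `C`. -/
noncomputable def ratFuncOver : Subfield (RatFunc k) :=
  Subfield.closure
    {u | ∃ p : k[X], (∀ i, p.coeff i ∈ C) ∧ u = algebraMap k[X] (RatFunc k) p}

lemma algebraMap_comp_mapRingHom_injective {R K : Type*} [CommRing R] [Field K] {φ : R →+* K}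
    (hφ : Function.Injective φ) :
    Function.Injective ((algebraMap K[X] (RatFunc K)).comp (mapRingHom φ)) :=
  (RatFunc.algebraMap_injective K).comp (map_injective φ hφ)

lemma ratFuncOver_eq_fieldRange_lift :
    ratFuncOver C = (IsFractionRing.lift (K := RatFunc C)
      (algebraMap_comp_mapRingHom_injective (algebraMap C k).injective)).fieldRange := by
  rw [IsFractionRing.lift_fieldRange, ratFuncOver]
  congr 1
  ext u
  constructor
  · rintro ⟨p, hp, rfl⟩
    obtain ⟨r, rfl⟩ := (mem_lifts p).1 ((lifts_iff_coeff_lifts (f := algebraMap C k) p).2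
      fun i => ⟨⟨p.coeff i, hp i⟩, rfl⟩)
    exact ⟨r, rfl⟩
  · rintro ⟨r, rfl⟩
    exact ⟨r.map (algebraMap C k), fun i => by rw [coeff_map]; exact (r.coeff i).2, rfl⟩

lemma mk_map_mem_ratFuncOver (p q : C[X]) :
    RatFunc.mk (p.map (algebraMap C k)) (q.map (algebraMap C k)) ∈ ratFuncOver C := by
  have hmem (r : C[X]) : algebraMap k[X] (RatFunc k) (r.map (algebraMap C k)) ∈ ratFuncOver C :=
    Subfield.subset_closure ⟨_, fun i => by rw [coeff_map]; exact (r.coeff i).2, rfl⟩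
  rw [RatFunc.mk_eq_div]
  exact div_mem (hmem p) (hmem q)

lemma exists_common_denominator_of_mem_ratFuncOver {ι : Type*} [Finite ι] {f : ι → RatFunc k}
    (hf : ∀ i, f i ∈ ratFuncOver C) :
    ∃ b : C[X], b ≠ 0 ∧ ∃ m : ι → C[X],
      f = fun i => RatFunc.mk ((m i).map (algebraMap C k)) (b.map (algebraMap C k)) := by
  simp only [ratFuncOver_eq_fieldRange_lift, RingHom.mem_fieldRange] at hf
  choose u hu using hf
  obtain ⟨b, hb⟩ := IsLocalization.exist_integer_multiples_of_finite (nonZeroDivisors C[X]) u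
  choose m hm using hb
  refine ⟨b, nonZeroDivisors.ne_zero b.2, m, funext fun i => ?_⟩
  have hbm := congrArg (IsFractionRing.lift
    (algebraMap_comp_mapRingHom_injective (algebraMap C k).injective)) (hm i)
  rw [Algebra.smul_def, map_mul, hu, IsFractionRing.lift_algebraMap, IsFractionRing.lift_algebraMap]
    at hbm
  rw [RatFunc.mk_eq_div, eq_div_iff (RatFunc.algebraMap_ne_zero
    (Polynomial.map_ne_zero (nonZeroDivisors.ne_zero b.2))), mul_comm]
  exact hbm.symm

end RatFuncOver

lemma derivation_mem_subfieldClosure {R K : Type*} [CommRing R] [Field K] [Algebra R K]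
    (D : Derivation R K K) {s : Set K} (hs : ∀ x ∈ s, D x ∈ Subfield.closure s) {x : K}
    (hx : x ∈ Subfield.closure s) : D x ∈ Subfield.closure s := by
  induction hx using Subfield.closure_induction with
  | mem x hx => exact hs x hx
  | one => rw [D.map_one_eq_zero]; exact zero_mem _
  | add x y _ _ hx hy => rw [map_add]; exact add_mem hx hy
  | neg x _ hx => rw [map_neg]; exact neg_mem hx
  | inv x hx hDx => rw [D.leibniz_inv]; exact mul_mem (neg_mem (pow_mem (inv_mem hx) 2)) hDx
  | mul x y hx hy hDx hDy =>
    rw [D.leibniz]; exact add_mem (mul_mem hx hDy) (mul_mem hy hDx)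

lemma iterate_derivation_mem_ratFuncOver {k : Type*} [Field k] {C : Subfield k}
    {D : Derivation k (RatFunc k) (RatFunc k)} (hD : D RatFunc.X = 1) {f : RatFunc k}
    (hf : f ∈ ratFuncOver C) (n : ℕ) : D^[n] f ∈ ratFuncOver C := by
  have hmaps : Set.MapsTo D (ratFuncOver C) (ratFuncOver C) := by
    refine fun x hx => derivation_mem_subfieldClosure D ?_ hx
    rintro _ ⟨p, hp, rfl⟩
    refine Subfield.subset_closure ⟨derivative p, fun i => ?_, ?_⟩
    · rw [coeff_derivative]
      exact mul_mem (hp _) (by exact_mod_cast natCast_mem C (i + 1))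
    · rw [← RatFunc.aeval_X_left_eq_algebraMap, D.map_aeval, hD]
      simp
  exact hmaps.iterate n hf

theorem descent_of_constants_finite_difference_general {k ι : Type*} [Field k] [Fintype ι]
    {C : Subfield k} {t : C[X]} {τ : RatFunc k →ₐ[k] RatFunc k}
    (hτ : τ RatFunc.X = algebraMap k[X] (RatFunc k) (t.map (algebraMap C k)))
    {f : ι → RatFunc k} (hf : ∀ i, f i ∈ ratFuncOver C)
    {lam : ι → k} (hlam : ∃ i, lam i ≠ 0) {g : RatFunc k} (h : ∑ i, lam i • f i = τ g - g) :
    ∃ mu : ι → k, (∀ i, mu i ∈ C) ∧ (∃ i, mu i ≠ 0) ∧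
      ∃ h' ∈ ratFuncOver C, ∑ i, mu i • f i = τ h' - h' := by
  obtain ⟨r, hr, m, rfl⟩ := exists_common_denominator_of_mem_ratFuncOver hf
  obtain ⟨b, hb, P, hP⟩ := exists_algHom_sub_eq_algHom_mk_map_sub hτ hr
    (h.symm.trans (sum_smul_ratFunc_mk _ _ _ _))
  have hiff (a : ι → k) (p : k[X]) := sum_smul_mk_eq_algHom_mk_sub_mk_iff hτ a
    (fun i => (m i).map (algebraMap C k)) p (Polynomial.map_ne_zero (f := algebraMap C k) hb)
    (Polynomial.map_ne_zero (f := algebraMap C k) hr)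
  simp only [← Polynomial.map_comp, ← Polynomial.map_mul] at hiff
  obtain ⟨mu, ⟨i, hi⟩, p, hp⟩ := exists_sum_C_mul_eq_of_map hlam ((hiff lam P).1 (h.trans hP))
  refine ⟨fun i => algebraMap C k (mu i), fun i => (mu i).2, ⟨i, by simpa using hi⟩, _,
    mk_map_mem_ratFuncOver p b, (hiff _ _).2 ?_⟩
  simpa only [Polynomial.map_mul, Polynomial.map_comp, Polynomial.map_sum, Polynomial.map_sub,
    map_C] using congrArg (Polynomial.map (algebraMap C k)) hp

/-- Descent of constants for finite difference equations: if some nonzero `k`-linear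
combination of `f, f', …, f⁽ⁿ⁾` (with `f ∈ C(X)`) is of the form `g(X+1) - g(X)` for some
`g ∈ k(X)`, then this already happens with coefficients in `C` and `h ∈ C(X)`,
where `C ⊆ k` is algebraically closed. -/
theorem descent_of_constants_finite_difference
    (k : Type*) [Field k] [CharZero k]
    (C : Subfield k) [IsAlgClosed C]
    (D : Derivation k (RatFunc k) (RatFunc k)) (hD : D RatFunc.X = 1)
    (τ : RatFunc k →ₐ[k] RatFunc k) (hτ : τ RatFunc.X = RatFunc.X + 1)
    (CX : Subfield (RatFunc k))
    (hCX : CX = Subfield.closure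
      { u : RatFunc k | ∃ p : Polynomial k, (∀ i, p.coeff i ∈ C) ∧
          u = algebraMap (Polynomial k) (RatFunc k) p })
    (f : RatFunc k) (hf : f ∈ CX)
    (n : ℕ) (lam : Fin (n + 1) → k) (hlam : ∃ i, lam i ≠ 0) (g : RatFunc k)
    (h : ∑ i : Fin (n + 1), lam i • (⇑D)^[(i : ℕ)] f = τ g - g) :
    ∃ mu : Fin (n + 1) → k, (∀ i, mu i ∈ C) ∧ (∃ i, mu i ≠ 0) ∧
      ∃ h' ∈ CX, ∑ i : Fin (n + 1), mu i • (⇑D)^[(i : ℕ)] f = τ h' - h' := by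
  subst hCX
  exact descent_of_constants_finite_difference_general (t := X + 1) (by simp [hτ])
    (fun i => iterate_derivation_mem_ratFuncOver hD hf i) hlam h
end

section
/- In the field ℂ(X) of rational functions over ℂ with standard derivation D = d/dX, for every n ≥ 0, every λ₀, …, λₙ ∈ ℂ not all zero, and every g ∈ ℂ(X), one has λ₀·(1/X) + λ₁·D(1/X) + ⋯ + λₙ·Dⁿ(1/X) ≠ σ(g) − g, where σ : ℂ(X) → ℂ(X) is the ℂ-algebra automorphism determined by X ↦ X + 1. -/
set_option synthInstance.maxHeartbeats 400000
set_option maxHeartbeats 1000000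

/-!
The combination in question is a nonconstant polynomial in `1/X`, so its only pole is `0`. If it
were `σ g - g`, then at every integer `m ≠ 0` the function `g` would be regular at `m` exactly when
it is regular at `m + 1`. Since `g` has finitely many poles, it is regular at integers far to the
left and far to the right of `0`; hence it is regular at all `m ≤ 0` and at all `m ≥ 1`. Then
both `g` and `σ g` are regular at `0`, and so is their difference.
-/

open Polynomial Filter

section Derivation

variable {R F : Type*} [CommRing R] [Field F] [Algebra R F] {x : F}

theorem iterate_derivation_inv (D : Derivation R F F) (hx : D x = 1) (i : ℕ) :
    D^[i] x⁻¹ = ((-1) ^ i * (i.factorial : R)) • x⁻¹ ^ (i + 1) := by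
  induction i with
  | zero => simp
  | succ i ih =>
    rw [Function.iterate_succ_apply', ih, D.map_smul, D.leibniz_pow, D.leibniz_inv, hx]
    simp only [smul_eq_mul, nsmul_eq_mul, Nat.add_sub_cancel]
    simp only [Algebra.smul_def, Nat.factorial_succ, Nat.cast_mul, map_mul, map_pow, map_neg,
      map_one, map_natCast]
    ring

theorem exists_sum_iterate_derivation_inv_eq_aeval [CharZero R] [NoZeroDivisors R]
    (D : Derivation R F F) (hx : D x = 1) {n : ℕ} {lam : Fin n → R} (hlam : ∃ i, lam i ≠ 0) :
    ∃ P : R[X], 0 < P.natDegree ∧ ∑ i, lam i • D^[i] x⁻¹ = aeval x⁻¹ P := by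
  obtain ⟨i, hi⟩ := hlam
  let coeffs (j : Fin n) : R := lam j * ((-1) ^ (j : ℕ) * ((j : ℕ).factorial : R))
  refine ⟨∑ j : Fin n, monomial (j + 1) (coeffs j), ?_, ?_⟩
  · have coeff_ne_zero : (∑ j : Fin n, monomial (j + 1) (coeffs j)).coeff (i + 1) ≠ 0 := by
      simp [coeff_monomial, Fin.val_inj, coeffs, hi, Nat.factorial_ne_zero]
    exact i.val.succ_pos.trans_le (le_natDegree_of_ne_zero coeff_ne_zero)
  · simp [iterate_derivation_inv D hx, coeffs, aeval_monomial, Algebra.smul_def, mul_assoc]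

end Derivation

theorem aeval_mem_valuationSubring_iff {K F : Type*} [Field K] [Field F] [Algebra K F]
    {A : ValuationSubring F} (hA : ∀ c : K, algebraMap K F c ∈ A) {P : K[X]}
    (hP : 0 < P.natDegree) {y : F} : aeval y P ∈ A ↔ y ∈ A := by
  constructor
  · have trivial_on_constants : A.valuation.IsTrivialOn K :=
      ⟨fun c hc => le_antisymm ((A.valuation_le_one_iff _).2 (hA c)) <| by
        have := (A.valuation_le_one_iff _).2 (hA c⁻¹)
        rwa [map_inv₀, map_inv₀, inv_le_one₀ (by simpa [zero_lt_iff] using hc)] at this⟩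
    contrapose
    simp only [← A.valuation_le_one_iff, not_le]
    intro hy
    rw [valuation_aeval_eq_valuation_X_pow_natDegree_of_one_lt_valuation_X y hy
      (ne_zero_of_natDegree_gt hP)]
    exact one_lt_pow₀ hy hP.ne'
  · intro hy
    rw [aeval_eq_sum_range]
    refine sum_mem fun i _ => ?_
    rw [Algebra.smul_def]
    exact mul_mem (hA _) (pow_mem hy i)

section RegularAt

variable {K : Type*} [Field K] {a c : K} {f g : RatFunc K}

/-- The local ring of the affine line over `K` at the point `a`, as a valuation subring of the
function field `K(X)`: the rational functions whose reduced denominator does not vanish at `a`. -/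
def regularAt (a : K) : ValuationSubring (RatFunc K) where
  carrier := {f | f.denom.eval a ≠ 0}
  mul_mem' {f g} hf hg h :=
    mul_ne_zero hf hg <| by
      simpa using eval_eq_zero_of_dvd_of_eval_eq_zero (f.denom_mul_dvd g) h
  one_mem' := by simp
  add_mem' {f g} hf hg h :=
    mul_ne_zero hf hg <| by
      simpa using eval_eq_zero_of_dvd_of_eval_eq_zero (f.denom_add_dvd g) h
  zero_mem' := by simp
  neg_mem' {f} hf h := by
    have denom_neg_dvd : (-f).denom ∣ f.denom := by
      have denom_mul_dvd := RatFunc.denom_mul_dvd (RatFunc.C (-1)) f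
      rwa [RatFunc.denom_C, one_mul, map_neg, map_one, neg_one_mul] at denom_mul_dvd
    exact hf (eval_eq_zero_of_dvd_of_eval_eq_zero denom_neg_dvd h)
  mem_or_inv_mem' f := by
    rcases eq_or_ne f 0 with rfl | hf
    · simp
    · refine (aeval_ne_zero_of_isCoprime f.isCoprime_num_denom a).symm.imp ?_ ?_
      · simp
      · exact fun hnum hinv => hnum <| by
          simpa using eval_eq_zero_of_dvd_of_eval_eq_zero (RatFunc.denom_inv_dvd hf) hinv

theorem mem_regularAt : f ∈ regularAt a ↔ f.denom.eval a ≠ 0 := Iff.rfl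

theorem div_mem_regularAt (p : K[X]) {q : K[X]} (hq : q.eval a ≠ 0) :
    algebraMap K[X] (RatFunc K) p / algebraMap K[X] (RatFunc K) q ∈ regularAt a :=
  fun h => hq (eval_eq_zero_of_dvd_of_eval_eq_zero (RatFunc.denom_div_dvd p q) h)

theorem algebraMap_mem_regularAt (c : K) : algebraMap K (RatFunc K) c ∈ regularAt a := by
  simp [mem_regularAt, RatFunc.algebraMap_eq_C]

theorem inv_X_mem_regularAt_iff : RatFunc.X⁻¹ ∈ regularAt a ↔ a ≠ 0 := by
  have denom_inv_X : (RatFunc.X⁻¹ : RatFunc K).denom = X :=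
    eq_of_monic_of_associated (RatFunc.monic_denom _) monic_X <| by
      simpa using RatFunc.associated_denom_inv (RatFunc.X_ne_zero (K := K))
  rw [mem_regularAt, denom_inv_X, eval_X]

theorem eventually_mem_regularAt (f : RatFunc K) : ∀ᶠ a in cofinite, f ∈ regularAt a := by
  simpa [mem_regularAt, eventually_cofinite] using finite_setOfPred_isRoot f.denom_ne_zero

variable {σ : RatFunc K →ₐ[K] RatFunc K}

theorem shift_algebraMap (hσ : σ RatFunc.X = RatFunc.X + RatFunc.C c) (p : K[X]) :
    σ (algebraMap K[X] (RatFunc K) p) = algebraMap K[X] (RatFunc K) (p.comp (X + C c)) := by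
  have hX : σ RatFunc.X = algebraMap K[X] (RatFunc K) (X + C c) := by simp [hσ]
  rw [← RatFunc.aeval_X_left_eq_algebraMap, ← aeval_algHom_apply, hX, aeval_algebraMap_apply,
    ← comp_eq_aeval]

theorem shift_mem_regularAt_iff (hσ : σ RatFunc.X = RatFunc.X + RatFunc.C c) :
    σ f ∈ regularAt a ↔ f ∈ regularAt (a + c) := by
  constructor <;> intro hf
  · rw [mem_regularAt] at hf
    have unshift (p : K[X]) :
        σ (algebraMap K[X] (RatFunc K) (p.comp (X - C c))) = algebraMap K[X] (RatFunc K) p := by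
      simp [shift_algebraMap hσ, comp_assoc]
    have hf_eq : f = algebraMap K[X] (RatFunc K) ((σ f).num.comp (X - C c)) /
        algebraMap K[X] (RatFunc K) ((σ f).denom.comp (X - C c)) := by
      apply σ.toRingHom.injective
      simp [unshift, RatFunc.num_div_denom]
    rw [hf_eq]
    exact div_mem_regularAt _ (by simpa using hf)
  · rw [mem_regularAt] at hf
    rw [← f.num_div_denom, map_div₀, shift_algebraMap hσ, shift_algebraMap hσ]
    exact div_mem_regularAt _ (by simpa using hf)

theorem exists_nat_mem_regularAt_add_mul [CharZero K] (hc : c ≠ 0) (a : K) (g : RatFunc K) :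
    ∃ n : ℕ, g ∈ regularAt (a + n * c) := by
  have injective_translates : Function.Injective fun n : ℕ => a + n * c := fun m n h => by
    simpa [hc] using h
  exact (injective_translates.tendsto_cofinite.eventually (eventually_mem_regularAt g)).exists

theorem shift_sub_self_mem_regularAt [CharZero K] (hc : c ≠ 0)
    (hσ : σ RatFunc.X = RatFunc.X + RatFunc.C c)
    (hreg : ∀ m : ℤ, m ≠ 0 → σ g - g ∈ regularAt (a + m * c)) : σ g - g ∈ regularAt a := by
  have step (m : ℤ) (hm : m ≠ 0) :
      g ∈ regularAt (a + m * c) ↔ g ∈ regularAt (a + m * c + c) := by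
    rw [← shift_mem_regularAt_iff hσ]
    exact ⟨fun h => by simpa using add_mem (hreg m hm) h,
      fun h => by simpa using sub_mem h (hreg m hm)⟩
  have regular_left : g ∈ regularAt a := by
    obtain ⟨n, hn⟩ := exists_nat_mem_regularAt_add_mul (neg_ne_zero.2 hc) a g
    induction n with
    | zero => simpa using hn
    | succ n ih =>
      have translate : a + (n + 1 : ℕ) * -c = a + (-(n + 1) : ℤ) * c := by push_cast; ring
      rw [translate, step _ (by lia)] at hn
      exact ih (by convert hn using 2; push_cast; ring)
  have regular_right : g ∈ regularAt (a + c) := by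
    obtain ⟨n, hn⟩ := exists_nat_mem_regularAt_add_mul hc (a + c) g
    induction n with
    | zero => simpa using hn
    | succ n ih =>
      have translate : a + c + (n + 1 : ℕ) * c = a + (n + 1 : ℤ) * c + c := by push_cast; ring
      rw [translate, ← step _ (by lia)] at hn
      exact ih (by convert hn using 2; push_cast; ring)
  exact sub_mem ((shift_mem_regularAt_iff hσ).2 regular_right) regular_left

end RegularAt

theorem one_over_X_not_summable_finite_difference_general {K : Type*} [Field K] [CharZero K]
    (D : Derivation K (RatFunc K) (RatFunc K)) (hD : D RatFunc.X = 1) {c : K} (hc : c ≠ 0)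
    (σ : RatFunc K →ₐ[K] RatFunc K) (hσ : σ RatFunc.X = RatFunc.X + RatFunc.C c)
    {n : ℕ} (lam : Fin n → K) (hlam : ∃ i, lam i ≠ 0) (g : RatFunc K) :
    ∑ i, lam i • D^[i] RatFunc.X⁻¹ ≠ σ g - g := by
  obtain ⟨P, hP, sum_eq⟩ := exists_sum_iterate_derivation_inv_eq_aeval D hD hlam
  rw [sum_eq]
  intro h
  have regular_iff (a : K) : σ g - g ∈ regularAt a ↔ a ≠ 0 := by
    rw [← h, aeval_mem_valuationSubring_iff algebraMap_mem_regularAt hP, inv_X_mem_regularAt_iff]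
  have regular_at_zero : σ g - g ∈ regularAt 0 :=
    shift_sub_self_mem_regularAt hc hσ fun m hm => (regular_iff _).2 (by simp [hm, hc])
  exact (regular_iff 0).1 regular_at_zero rfl

/-- In `ℂ(X)` with the standard derivation `D = d/dX` and the shift automorphism
`σ : X ↦ X + 1`, no nonzero `ℂ`-linear combination of `1/X, D(1/X), …, Dⁿ(1/X)` is of the
form `σ(g) - g` with `g ∈ ℂ(X)`. -/
theorem one_over_X_not_summable_finite_difference
    (D : Derivation ℂ (RatFunc ℂ) (RatFunc ℂ)) (hD : D RatFunc.X = 1)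
    (σ : RatFunc ℂ →ₐ[ℂ] RatFunc ℂ) (hσ : σ RatFunc.X = RatFunc.X + 1)
    (n : ℕ) (lam : Fin (n + 1) → ℂ) (hlam : ∃ i, lam i ≠ 0) (g : RatFunc ℂ) :
    ∑ i : Fin (n + 1), lam i • (⇑D)^[(i : ℕ)] (RatFunc.X⁻¹) ≠ σ g - g :=
  one_over_X_not_summable_finite_difference_general D hD one_ne_zero σ (by simpa using hσ)
    lam hlam g
end
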